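/- arXiv:1505.02315 — 3 statements merged into one kernel-verified Lean document; each statement's English description precedes it below -/
import Mathlib

section
/- Let U and V be finite-dimensional vector spaces over a field K and 𝒮 an affine subspace of L(U,V) with codim 𝒮 = dim V − 1. Assume that either dim V ≥ 3 and K has more than 2 elements, or dim V ≥ 2 and K has more than 3 elements. Then either every quasi-range-compatible affine map F : 𝒮 → V is local, or there exists a vector x ∈ U such that the affine subspace 𝒮x = {s(x) : s ∈ 𝒮} of V has dimension 1. -/
attribute [local instance] AffineSubspace.toAddTorsor

/-!
Let `W` be the direction of `𝒮` and `T ⊆ L(V, U)` its orthogonal for the trace pairing, so that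
`dim T = dim V - 1`. The operators of `T` that vanish on `N ⊆ V` measure the codimension of the
image of `W` in `L(U, V ⧸ N)`, which lets one work modulo `N` without leaving `V`.

If a functional `φ` does not vanish on `D` and `T` contains no nonzero `φ ⊗ x`, then `s ↦ φ ∘ s`
maps `𝒮` onto `Dual K U`, and quasi-range-compatibility forces `φ (F s) = φ (s x)` for some `x`.
Comparing the vectors `x` obtained at several points of a pencil `φ + c ψ` shows that `F` is local
modulo subspaces `N` of codimension 2 when no nonzero operator of `T` vanishes on `N`. Locality
descends from `N + K y` and `N + K z` to their intersection `N`, so by induction `F` is local modulo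
every `N` not containing `D` such that the image of `W` has codimension at most `dim (V ⧸ N) - 2`.

For `dim V ≥ 3` this applies to enough lines `N = K y` to conclude, unless `dim T y ≤ 1` for all `y`
outside a proper subspace; then all operators of `T` have their range in one line `K x`, and
`𝒮 x` has dimension 1. For `dim V = 2` the space `T` is itself a line, and a fourth point of the
pencil replaces the vanishing of `T`.
-/

open Module

namespace QuasiRangeCompatible

variable {K U V : Type*} [Field K] [AddCommGroup U] [Module K U] [AddCommGroup V] [Module K V]

section LinearAlgebra

theorem eq_top_of_forall_notMem_mem {E p : Submodule K V} (hE : E ≠ ⊤) (h : ∀ y ∉ E, y ∈ p) :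
    p = ⊤ := by
  obtain ⟨z, -, hz⟩ := SetLike.exists_of_lt hE.lt_top
  refine (Submodule.eq_top_iff').2 fun y => ?_
  by_cases hy : y ∈ E
  · have hyz : y + z ∉ E := fun hyz => hz ((E.add_mem_iff_right hy).1 hyz)
    exact (p.add_mem_iff_left (h z hz)).1 (h _ hyz)
  · exact h y hy

theorem exists_notMem_apply_ne_zero {E : Submodule K V} (hE : E ≠ ⊤) {t : V →ₗ[K] U}
    (ht : t ≠ 0) : ∃ y ∉ E, t y ≠ 0 := by
  by_contra! h
  exact ht (LinearMap.ker_eq_top.1 (eq_top_of_forall_notMem_mem hE h))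

theorem exists_ne_zero_ne_one (hK : 2 < Cardinal.mk K) : ∃ c : K, c ≠ 0 ∧ c ≠ 1 := by
  obtain ⟨c, hc⟩ := Cardinal.exists_notMem_of_length_lt [(0 : K), 1] (by simpa using hK)
  exact ⟨c, by simpa using hc⟩

theorem exists_ne_zero_add_smul_notMem (hK : 2 < Cardinal.mk K) {E : Submodule K V} (y : V)
    {z : V} (hz : z ∉ E) : ∃ a : K, a ≠ 0 ∧ y + a • z ∉ E := by
  obtain ⟨c, hc0, hc1⟩ := exists_ne_zero_ne_one hK
  by_cases hyz : y + z ∈ E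
  · refine ⟨c, hc0, fun hcz => hz ((E.smul_mem_iff (sub_ne_zero.2 hc1)).1 ?_)⟩
    have hdiff : (c - 1) • z = (y + c • z) - (y + z) := by module
    exact hdiff ▸ E.sub_mem hcz hyz
  · exact ⟨1, one_ne_zero, by rwa [one_smul]⟩

theorem span_singleton_eq_of_mem {u v : V} (hu : u ≠ 0) (h : u ∈ K ∙ v) : K ∙ u = K ∙ v := by
  obtain ⟨c, rfl⟩ := Submodule.mem_span_singleton.1 h
  exact Submodule.span_singleton_smul_eq (isUnit_iff_ne_zero.2 (left_ne_zero_of_smul hu)) v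

theorem notMem_sup_span_singleton_comm {N : Submodule K V} {d y : V} (hd : d ∉ N)
    (hy : y ∉ N ⊔ K ∙ d) : d ∉ N ⊔ K ∙ y := by
  have h := mem_span_insert_exchange (K := K) (x := d) (y := y) (s := (N : Set V))
  simp only [Submodule.span_insert, Submodule.span_eq, sup_comm (K ∙ _) N] at h
  exact fun hdy => hy (h hdy hd)

theorem sup_span_singleton_inf_sup_span_singleton {N : Submodule K V} {y z : V}
    (hz : z ∉ N ⊔ K ∙ y) : (N ⊔ K ∙ y) ⊓ (N ⊔ K ∙ z) = N := by
  have hcov : N ⩿ N ⊔ K ∙ z := sup_comm N _ ▸ Submodule.wcovBy_span_singleton_sup z N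
  refine (hcov.eq_or_eq (le_inf le_sup_left le_sup_left) inf_le_right).resolve_right fun h => hz ?_
  exact inf_eq_right.1 h (Submodule.mem_sup_right (Submodule.mem_span_singleton_self z))

theorem finrank_span_singleton_le_one (y : V) : finrank K (K ∙ y) ≤ 1 :=
  (finrank_span_le_card {y}).trans (by simp)

theorem finrank_inf_ker_add_finrank_map (T : Submodule K U) [FiniteDimensional K T]
    (f : U →ₗ[K] V) :
    finrank K ↥(T ⊓ LinearMap.ker f) + finrank K (T.map f) = finrank K T := by
  have hker : (LinearMap.ker (f.domRestrict T)).map T.subtype = T ⊓ LinearMap.ker f := by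
    rw [LinearMap.domRestrict, LinearMap.ker_comp, Submodule.map_comap_subtype]
  rw [← hker, Submodule.finrank_map_subtype_eq, ← LinearMap.range_domRestrict, add_comm,
    LinearMap.finrank_range_add_finrank_ker]

theorem mem_span_singleton_of_finrank_le_one {M : Submodule K V} [FiniteDimensional K M]
    (hM : finrank K M ≤ 1) {u v : V} (hu : u ∈ M) (hv : v ∈ M) (hu0 : u ≠ 0) : v ∈ K ∙ u := by
  have hspan : K ∙ u = M := Submodule.eq_of_le_of_finrank_le
    ((Submodule.span_singleton_le_iff_mem u M).2 hu) (by rwa [finrank_span_singleton hu0])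
  rwa [hspan]

theorem exists_mem_span_singleton_of_not_linearIndependent_pair {p q : V}
    (h : ¬ LinearIndependent K ![p, q]) : ∃ x, p ∈ K ∙ x ∧ q ∈ K ∙ x := by
  by_cases hp : p = 0
  · exact ⟨q, by simp [hp], Submodule.mem_span_singleton_self q⟩
  · rw [LinearIndependent.pair_iff' hp] at h
    push Not at h
    exact ⟨p, Submodule.mem_span_singleton_self p, Submodule.mem_span_singleton.2 h⟩

theorem exists_ker_inf_ker_eq [FiniteDimensional K V] {N : Submodule K V}
    (hN : finrank K N + 2 = finrank K V) {d : V} (hd : d ∉ N) :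
    ∃ φ ψ : Dual K V, φ d = 1 ∧ ψ d = 0 ∧ ψ ≠ 0 ∧ LinearMap.ker φ ⊓ LinearMap.ker ψ = N := by
  obtain ⟨φ, hφN, hφd⟩ := LinearMap.exists_extend_of_notMem (0 : N →ₗ[K] K) hd 1
  have hNd : N ⊔ K ∙ d < ⊤ := Submodule.lt_top_of_finrank_lt_finrank
    (by rw [Submodule.finrank_sup_span_singleton hd]; omega)
  obtain ⟨ψ, hψ0, hψ⟩ := Submodule.exists_le_ker_of_lt_top _ hNd
  have hψd : ψ d = 0 := hψ (Submodule.mem_sup_right (Submodule.mem_span_singleton_self d))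
  have hle : N ≤ LinearMap.ker φ ⊓ LinearMap.ker ψ :=
    le_inf (fun y hy => LinearMap.congr_fun hφN ⟨y, hy⟩) (le_sup_left.trans hψ)
  have hlt : LinearMap.ker φ ⊓ LinearMap.ker ψ < LinearMap.ker ψ :=
    inf_lt_right.2 fun h => one_ne_zero (hφd.symm.trans (h hψd))
  have hlt_top : LinearMap.ker ψ < ⊤ := lt_top_iff_ne_top.2 (mt LinearMap.ker_eq_top.1 hψ0)
  refine ⟨φ, ψ, hφd, hψd, hψ0, (Submodule.eq_of_le_of_finrank_le hle ?_).symm⟩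
  have h₁ := Submodule.finrank_lt_finrank_of_lt hlt
  have h₂ := Submodule.finrank_lt hlt_top.ne
  omega

theorem eq_zero_of_smulRight_add_smulRight_eq_zero {φ ψ : Dual K V} {d : V} (hφ : φ d = 1)
    (hψ : ψ d = 0) (hψ0 : ψ ≠ 0) {u v : U} (h : φ.smulRight u + ψ.smulRight v = 0) :
    u = 0 ∧ v = 0 := by
  have hu : u = 0 := by simpa [hφ, hψ] using LinearMap.congr_fun h d
  refine ⟨hu, ?_⟩
  simpa [hu, hψ0] using h

theorem smulRight_left_injective {x : U} (hx : x ≠ 0) :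
    Function.Injective (LinearMap.smulRightₗ.flip x : Dual K V →ₗ[K] V →ₗ[K] U) :=
  (injective_iff_map_eq_zero _).2 fun _ hφ =>
    (LinearMap.smulRight_apply_eq_zero_iff.1 hφ).resolve_right hx

theorem exists_eq_smulRight_of_range_le {x : U} (hx : x ≠ 0) {t : V →ₗ[K] U}
    (ht : LinearMap.range t ≤ K ∙ x) : ∃ φ : Dual K V, t = φ.smulRight x := by
  obtain ⟨f, hf⟩ := Projective.exists_dual_eq_one K hx
  refine ⟨f ∘ₗ t, LinearMap.ext fun y => ?_⟩
  obtain ⟨c, hc⟩ := Submodule.mem_span_singleton.1 (ht ⟨y, rfl⟩)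
  simp [← hc, hf]

theorem ne_zero_of_forall_range_le_span_singleton {T : Submodule K (V →ₗ[K] U)} (hT : T ≠ ⊥)
    {x : U} (hx : ∀ t ∈ T, LinearMap.range t ≤ K ∙ x) : x ≠ 0 := by
  rintro rfl
  exact hT ((Submodule.eq_bot_iff T).2 fun t ht =>
    LinearMap.range_eq_bot.1 (by simpa using hx t ht))

theorem range_le_of_finrank_le_one {T : Submodule K (V →ₗ[K] U)} [FiniteDimensional K T]
    (hT : finrank K T ≤ 1) {s t : V →ₗ[K] U} (ht : t ∈ T) (ht0 : t ≠ 0) (hs : s ∈ T) :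
    LinearMap.range s ≤ LinearMap.range t := by
  obtain ⟨c, rfl⟩ := Submodule.mem_span_singleton.1
    (mem_span_singleton_of_finrank_le_one hT ht hs ht0)
  rintro _ ⟨y, rfl⟩
  exact ⟨c • y, map_smul t c y⟩

theorem eq_of_linearIndependent_pencil {u v w : U} (huv : LinearIndependent K ![u, v])
    {a b β : K} (ha : a ≠ 0) (hb0 : b ≠ 0) (hb1 : b ≠ 1)
    (hw : a • u - v = (a * (1 - a)) • w)
    (hw' : b • β • u - β • v = (b * (1 - b)) • w) : a = b := by
  have hrel : (a * b * ((1 - a) * β - (1 - b))) • u +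
      (b * (1 - b) - a * (1 - a) * β) • v = 0 := by
    linear_combination (norm := module) (a * (1 - a)) • hw' - (b * (1 - b)) • hw
  obtain ⟨hu, hv⟩ := LinearIndependent.pair_iff.1 huv _ _ hrel
  have hβ : (1 - a) * β = 1 - b := by simpa [ha, hb0, sub_eq_zero] using hu
  have hab : (a - b) * (1 - b) = 0 := by linear_combination -hv - a * hβ
  simpa [sub_eq_zero, hb1.symm] using hab

theorem eq_zero_of_forall_pencil_mem (hK : 3 < Cardinal.mk K) {T : Submodule K (V →ₗ[K] U)}
    (hT : finrank K T = 1) (hrange : ¬ ∃ x : U, ∀ t ∈ T, LinearMap.range t ≤ K ∙ x)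
    {φ ψ : Dual K V} {d : V} (hφd : φ d = 1) (hψd : ψ d = 0) (hψ0 : ψ ≠ 0) {w : U}
    (hw : ∀ c : K, ∃ u v : U, φ.smulRight u + ψ.smulRight v ∈ T ∧
      c • u - v = (c * (1 - c)) • w) : w = 0 := by
  have : FiniteDimensional K T := Module.finite_of_finrank_pos (by omega)
  obtain ⟨a, ha0, ha1⟩ := exists_ne_zero_ne_one (lt_trans (by norm_num) hK)
  obtain ⟨b, hb⟩ := Cardinal.exists_notMem_of_length_lt [0, 1, a] (by simpa using hK)
  simp only [List.mem_cons, List.not_mem_nil, or_false, not_or] at hb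
  obtain ⟨hb0, hb1, hba⟩ := hb
  obtain ⟨u, v, ht, huv⟩ := hw a
  obtain ⟨u', v', ht', huv'⟩ := hw b
  by_cases ht0 : φ.smulRight u + ψ.smulRight v = 0
  · obtain ⟨rfl, rfl⟩ := eq_zero_of_smulRight_add_smulRight_eq_zero hφd hψd hψ0 ht0
    simpa [ha0, sub_eq_zero, ha1.symm] using huv.symm
  have hindep : LinearIndependent K ![u, v] := by
    by_contra hdep
    obtain ⟨x, hu, hv⟩ := exists_mem_span_singleton_of_not_linearIndependent_pair hdep
    refine hrange ⟨x, fun s hs => (range_le_of_finrank_le_one hT.le ht ht0 hs).trans ?_⟩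
    rintro _ ⟨y, rfl⟩
    exact Submodule.add_mem _ (Submodule.smul_mem _ (φ y) hu) (Submodule.smul_mem _ (ψ y) hv)
  obtain ⟨β, hβ⟩ := Submodule.mem_span_singleton.1
    (mem_span_singleton_of_finrank_le_one hT.le ht ht' ht0)
  have hsub : φ.smulRight (β • u - u') + ψ.smulRight (β • v - v') = 0 := by
    rw [← sub_eq_zero.2 hβ]
    ext y
    simp only [LinearMap.add_apply, LinearMap.sub_apply, LinearMap.smul_apply,
      LinearMap.smulRight_apply]
    module
  obtain ⟨hu', hv'⟩ := eq_zero_of_smulRight_add_smulRight_eq_zero hφd hψd hψ0 hsub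
  rw [← sub_eq_zero.1 hu', ← sub_eq_zero.1 hv'] at huv'
  exact absurd (eq_of_linearIndependent_pencil hindep ha0 hb0 hb1 huv huv').symm hba

theorem exists_linearMap_comp_eq_of_surjective {A P E : Type*} [AddCommGroup A] [Module K A]
    [AddTorsor A P] [AddCommGroup E] [Module K E] {f : P →ᵃ[K] V} {g : P →ᵃ[K] E}
    (hg : Function.Surjective g) (hfg : ∀ p, g p = 0 → f p = 0) :
    ∃ l : E →ₗ[K] V, ∀ p, f p = l (g p) := by
  obtain ⟨p₀, hp₀⟩ := hg 0
  have hfp₀ : f p₀ = 0 := hfg p₀ hp₀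
  have hker : LinearMap.ker g.linear ≤ LinearMap.ker f.linear := fun v hv => by
    simpa [hfp₀] using hfg (v +ᵥ p₀) (by simp [LinearMap.mem_ker.1 hv, hp₀])
  obtain ⟨r, hr⟩ := LinearMap.exists_rightInverse_of_surjective g.linear
    (LinearMap.range_eq_top.2 (g.linear_surjective_iff.2 hg))
  refine ⟨f.linear ∘ₗ r, fun p => ?_⟩
  have hdiff : (p -ᵥ p₀) - r (g p) ∈ LinearMap.ker g.linear := by
    have hrg : g.linear (r (g p)) = g p := LinearMap.congr_fun hr (g p)
    simp [hrg, hp₀]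
  simpa [hfp₀, sub_eq_zero] using hker hdiff

theorem apply_mem_span_singleton_of_finrank_map_le_one {T : Submodule K (V →ₗ[K] U)}
    [FiniteDimensional K T] {y : V} (hy : finrank K (T.map (LinearMap.applyₗ y)) ≤ 1)
    {s t : V →ₗ[K] U} (hs : s ∈ T) (ht : t ∈ T) (hty : t y ≠ 0) : s y ∈ K ∙ t y :=
  mem_span_singleton_of_finrank_le_one hy ⟨t, ht, rfl⟩ ⟨s, hs, rfl⟩ hty

theorem apply_mem_span_singleton_of_apply_eq_zero (hK : 2 < Cardinal.mk K)
    {T : Submodule K (V →ₗ[K] U)} [FiniteDimensional K T] {E : Submodule K V}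
    (hrank : ∀ y ∉ E, finrank K (T.map (LinearMap.applyₗ y)) ≤ 1) {y z : V} (hz : z ∉ E)
    {s t : V →ₗ[K] U} (hs : s ∈ T) (ht : t ∈ T) (hty : t y = 0) (htz : t z ≠ 0) :
    s y ∈ K ∙ t z := by
  obtain ⟨a, ha, hyz⟩ := exists_ne_zero_add_smul_notMem hK y hz
  have htyz : t (y + a • z) = a • t z := by rw [map_add, map_smul, hty, zero_add]
  have hsz := apply_mem_span_singleton_of_finrank_map_le_one (hrank z hz) hs ht htz
  have hsyz := apply_mem_span_singleton_of_finrank_map_le_one (hrank _ hyz) hs ht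
    (by rw [htyz]; exact smul_ne_zero ha htz)
  rw [htyz, Submodule.span_singleton_smul_eq ha.isUnit, map_add, map_smul] at hsyz
  exact (Submodule.add_mem_iff_left _ (Submodule.smul_mem _ a hsz)).1 hsyz

theorem exists_range_le_span_singleton (hK : 2 < Cardinal.mk K) {T : Submodule K (V →ₗ[K] U)}
    (hT : 2 ≤ finrank K T) {E : Submodule K V} (hE : E ≠ ⊤)
    (hrank : ∀ y ∉ E, finrank K (T.map (LinearMap.applyₗ y)) ≤ 1) :
    ∃ x : U, ∀ t ∈ T, LinearMap.range t ≤ K ∙ x := by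
  have : FiniteDimensional K T := Module.finite_of_finrank_pos (by omega)
  obtain ⟨s₁, hs₁, hs₁0⟩ := Submodule.exists_mem_ne_zero_of_ne_bot
    (fun h : T = ⊥ => by rw [h, finrank_bot] at hT; omega)
  obtain ⟨y₁, hy₁, hs₁y₁⟩ := exists_notMem_apply_ne_zero hE hs₁0
  obtain ⟨t, ⟨ht, hty₁⟩, ht0⟩ := Submodule.exists_mem_ne_zero_of_ne_bot
    (fun h : T ⊓ LinearMap.ker (LinearMap.applyₗ y₁) = ⊥ => by
      have h₁ := finrank_inf_ker_add_finrank_map T (LinearMap.applyₗ y₁)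
      have h₂ := hrank y₁ hy₁
      rw [h, finrank_bot] at h₁
      omega)
  have hline : ∀ y ∉ E, t y ≠ 0 → K ∙ s₁ y₁ = K ∙ t y := fun y hy hty =>
    span_singleton_eq_of_mem hs₁y₁
      (apply_mem_span_singleton_of_apply_eq_zero hK hrank hy hs₁ ht hty₁ hty)
  obtain ⟨y₂, hy₂, hty₂⟩ := exists_notMem_apply_ne_zero hE ht0
  refine ⟨s₁ y₁, fun s hs => LinearMap.range_le_iff_comap.2
    (eq_top_of_forall_notMem_mem hE fun y hy => ?_)⟩
  rw [Submodule.mem_comap]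
  by_cases hty : t y = 0
  · exact hline y₂ hy₂ hty₂ ▸
      apply_mem_span_singleton_of_apply_eq_zero hK hrank hy₂ hs ht hty hty₂
  · exact hline y hy hty ▸ apply_mem_span_singleton_of_finrank_map_le_one (hrank y hy) hs ht hty

end LinearAlgebra

section TraceOrthogonal

/-- The trace pairing `(t, s) ↦ tr (s ∘ t)` between `L(V, U)` and `L(U, V)`; it is zero unless
`V` is finite-dimensional. -/
noncomputable def tracePairing : (V →ₗ[K] U) →ₗ[K] Dual K (U →ₗ[K] V) :=
  (LinearMap.llcomp K V U V).flip.compr₂ (LinearMap.trace K V)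

theorem tracePairing_apply (t : V →ₗ[K] U) (s : U →ₗ[K] V) :
    tracePairing t s = LinearMap.trace K V (s ∘ₗ t) := rfl

/-- The orthogonal of a space `W ⊆ L(U, V)` for the trace pairing, as a subspace of `L(V, U)`. -/
noncomputable def traceOrthogonal (W : Submodule K (U →ₗ[K] V)) : Submodule K (V →ₗ[K] U) :=
  W.dualAnnihilator.comap tracePairing

/-- The operators of `traceOrthogonal W` that vanish on `N`. They represent the annihilator of
`W mod N ⊆ L(U, V ⧸ N)`, so the dimension of this space is the codimension of `W mod N`. -/
noncomputable def traceOrthogonalMod (W : Submodule K (U →ₗ[K] V)) (N : Submodule K V) :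
    Submodule K (V →ₗ[K] U) :=
  traceOrthogonal W ⊓ N.compatibleMaps ⊥

variable {W : Submodule K (U →ₗ[K] V)} {N : Submodule K V}

theorem mem_traceOrthogonalMod {t : V →ₗ[K] U} :
    t ∈ traceOrthogonalMod W N ↔ t ∈ traceOrthogonal W ∧ ∀ y ∈ N, t y = 0 := Iff.rfl

theorem traceOrthogonalMod_anti (W : Submodule K (U →ₗ[K] V)) :
    Antitone (traceOrthogonalMod W) :=
  fun _ _ h _ ht => ⟨ht.1, h.trans ht.2⟩

theorem traceOrthogonalMod_span_singleton (W : Submodule K (U →ₗ[K] V)) (y : V) :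
    traceOrthogonalMod W (K ∙ y) = traceOrthogonal W ⊓ LinearMap.ker (LinearMap.applyₗ y) := by
  ext t
  exact and_congr_right fun _ => Submodule.span_singleton_le_iff_mem y _

theorem mem_traceOrthogonal_direction {𝒮 : AffineSubspace K (U →ₗ[K] V)} {t : V →ₗ[K] U}
    (h : ∀ s ∈ 𝒮, tracePairing t s = 0) : t ∈ traceOrthogonal 𝒮.direction := by
  refine (Submodule.mem_dualAnnihilator _).2 fun w hw => ?_
  suffices 𝒮.direction ≤ LinearMap.ker (tracePairing t) from this hw
  rw [AffineSubspace.direction_eq_vectorSpan, vectorSpan, Submodule.span_le]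
  rintro _ ⟨s, hs, s', hs', rfl⟩
  simp [h s hs, h s' hs']

variable [FiniteDimensional K V]

theorem tracePairing_smulRight (φ : Dual K V) (x : U) (s : U →ₗ[K] V) :
    tracePairing (φ.smulRight x) s = φ (s x) := by
  have hcomp : s ∘ₗ φ.smulRight x = φ.smulRight (s x) := by ext; simp
  rw [tracePairing_apply, hcomp, LinearMap.trace_smulRight]

theorem smulRight_mem_traceOrthogonal {φ : Dual K V} {x : U} :
    φ.smulRight x ∈ traceOrthogonal W ↔ ∀ w ∈ W, φ (w x) = 0 := by
  simp only [traceOrthogonal, Submodule.mem_comap, Submodule.mem_dualAnnihilator,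
    tracePairing_smulRight]

theorem tracePairing_injective :
    Function.Injective (tracePairing : (V →ₗ[K] U) →ₗ[K] Dual K (U →ₗ[K] V)) := by
  refine (injective_iff_map_eq_zero _).2 fun t ht => LinearMap.ext fun y => ?_
  refine (forall_dual_apply_eq_zero_iff K (t y)).1 fun f => ?_
  have hcomp : f.smulRight y ∘ₗ t = (f ∘ₗ t).smulRight y := by ext; simp
  have hpair := LinearMap.congr_fun ht (f.smulRight y)
  rwa [tracePairing_apply, hcomp, LinearMap.trace_smulRight] at hpair

theorem finrank_map_applyₗ_add_finrank_traceOrthogonal {x : U} (hx : x ≠ 0)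
    (hrange : ∀ t ∈ traceOrthogonal W, LinearMap.range t ≤ K ∙ x) :
    finrank K (W.map (LinearMap.applyₗ x)) + finrank K (traceOrthogonal W) = finrank K V := by
  have hmap : (W.map (LinearMap.applyₗ x)).dualAnnihilator.map (LinearMap.smulRightₗ.flip x) =
      traceOrthogonal W := by
    refine le_antisymm ?_ fun t ht => ?_
    · rintro _ ⟨φ, hφ, rfl⟩
      exact smulRight_mem_traceOrthogonal.2 fun w hw =>
        (Submodule.mem_dualAnnihilator φ).1 hφ _ ⟨w, hw, rfl⟩
    · obtain ⟨φ, rfl⟩ := exists_eq_smulRight_of_range_le hx (hrange t ht)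
      refine ⟨φ, (Submodule.mem_dualAnnihilator φ).2 ?_, rfl⟩
      rintro _ ⟨w, hw, rfl⟩
      exact smulRight_mem_traceOrthogonal.1 ht w hw
  rw [← hmap, ← (Submodule.equivMapOfInjective _ (smulRight_left_injective hx) _).finrank_eq,
    Subspace.finrank_add_finrank_dualAnnihilator_eq]

variable [FiniteDimensional K U]

theorem finrank_add_finrank_traceOrthogonal (W : Submodule K (U →ₗ[K] V)) :
    finrank K W + finrank K (traceOrthogonal W) = finrank K (U →ₗ[K] V) := by
  let e := LinearMap.linearEquivOfInjective (tracePairing (K := K) (U := U) (V := V))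
    tracePairing_injective
    (by rw [Subspace.dual_finrank_eq, finrank_linearMap, finrank_linearMap, mul_comm])
  rw [← Subspace.finrank_add_finrank_dualAnnihilator_eq W,
    ← (e.ofSubmodule' W.dualAnnihilator).finrank_eq]
  rfl

theorem finrank_le_finrank_add_finrank_traceOrthogonalMod {M : Submodule K V} {x : U}
    (hx : x ≠ 0) (h : ∀ φ ∈ M.dualAnnihilator, φ.smulRight x ∈ traceOrthogonal W) :
    finrank K V ≤ finrank K M + finrank K (traceOrthogonalMod W M) := by
  have hle : M.dualAnnihilator.map (LinearMap.smulRightₗ.flip x) ≤ traceOrthogonalMod W M := by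
    rintro _ ⟨φ, hφ, rfl⟩
    refine mem_traceOrthogonalMod.2 ⟨h φ hφ, fun y hy => ?_⟩
    simp [(Submodule.mem_dualAnnihilator φ).1 hφ y hy]
  rw [← Subspace.finrank_add_finrank_dualAnnihilator_eq M,
    (Submodule.equivMapOfInjective _ (smulRight_left_injective hx) _).finrank_eq]
  exact Nat.add_le_add_left (Submodule.finrank_mono hle) _

theorem map_compRight_eq_top {φ : Dual K V}
    (hφ : ∀ x : U, φ.smulRight x ∈ traceOrthogonal W → x = 0) :
    W.map (LinearMap.compRight K φ) = ⊤ := by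
  have hbot : (W.map (LinearMap.compRight K φ)).dualCoannihilator = ⊥ :=
    (Submodule.eq_bot_iff _).2 fun x hx => hφ x <| smulRight_mem_traceOrthogonal.2 fun w hw =>
      (Submodule.mem_dualCoannihilator x).1 hx _ ⟨w, hw, rfl⟩
  rw [← Subspace.dualCoannihilator_dualAnnihilator_eq (W := W.map _), hbot,
    Submodule.dualAnnihilator_bot]

end TraceOrthogonal

section AffineMaps

variable {𝒮 : AffineSubspace K (U →ₗ[K] V)} {d : V} {N : Submodule K V}

/-- Quasi-range-compatibility of `F : 𝒮 → V` with respect to the line spanned by `d`. -/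
def IsQuasiRangeCompatible (d : V) (F : 𝒮 → V) : Prop :=
  ∀ s : 𝒮, d ∉ LinearMap.range (s : U →ₗ[K] V) → F s ∈ LinearMap.range (s : U →ₗ[K] V)

/-- The composite of `F : 𝒮 → V` with the projection `V → V ⧸ N` is local. -/
def IsLocalMod (F : 𝒮 → V) (N : Submodule K V) : Prop :=
  ∃ x : U, ∀ s : 𝒮, F s - (s : U →ₗ[K] V) x ∈ N

/-- The image of `W` in `L(U, V ⧸ N)` has codimension at most `dim (V ⧸ N) - 2`, stated additively
to avoid truncated subtraction. -/
def HasSmallCodimMod (W : Submodule K (U →ₗ[K] V)) (N : Submodule K V) : Prop :=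
  finrank K N + finrank K (traceOrthogonalMod W N) + 2 ≤ finrank K V

theorem isLocalMod_bot_iff {F : 𝒮 → V} : IsLocalMod F ⊥ ↔ ∃ x : U, ∀ s : 𝒮, F s = s.1 x := by
  simp only [IsLocalMod, Submodule.mem_bot, sub_eq_zero]

variable [FiniteDimensional K V]

-- The relation comes from `φ + c ψ = (1 - c) φ + c (φ + ψ)`.
theorem exists_smulRight_add_smulRight_mem_traceOrthogonal {F : 𝒮 → V} {φ ψ : Dual K V} {c : K}
    {x₀ x₁ x : U} (h₀ : ∀ s : 𝒮, φ (F s) = φ (s.1 x₀))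
    (h₁ : ∀ s : 𝒮, (φ + ψ) (F s) = (φ + ψ) (s.1 x₁))
    (h : ∀ s : 𝒮, (φ + c • ψ) (F s) = (φ + c • ψ) (s.1 x)) :
    ∃ u v : U, φ.smulRight u + ψ.smulRight v ∈ traceOrthogonal 𝒮.direction ∧
      c • u - v = (c * (1 - c)) • (x₀ - x₁) := by
  refine ⟨(1 - c) • x₀ + c • x₁ - x, c • (x₁ - x),
    mem_traceOrthogonal_direction fun s hs => ?_, by module⟩
  have hs₀ := h₀ ⟨s, hs⟩
  have hs₁ := h₁ ⟨s, hs⟩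
  have hsc := h ⟨s, hs⟩
  simp only [LinearMap.add_apply, LinearMap.smul_apply, smul_eq_mul] at hs₁ hsc
  simp only [map_add, map_sub, map_smul, LinearMap.add_apply, tracePairing_smulRight, smul_eq_mul]
  linear_combination (c - 1) * hs₀ - c * hs₁ + hsc

variable [FiniteDimensional K U]

theorem IsLocalMod.inf {F : 𝒮 → V} {N₁ N₂ : Submodule K V} (h₁ : IsLocalMod F N₁)
    (h₂ : IsLocalMod F N₂)
    (hcodim : finrank K ↥(N₁ ⊔ N₂) + finrank K (traceOrthogonalMod 𝒮.direction (N₁ ⊔ N₂)) <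
      finrank K V) : IsLocalMod F (N₁ ⊓ N₂) := by
  obtain ⟨x₁, h₁⟩ := h₁
  obtain ⟨x₂, h₂⟩ := h₂
  have hx : x₁ = x₂ := by
    by_contra hne
    refine hcodim.not_ge (finrank_le_finrank_add_finrank_traceOrthogonalMod (sub_ne_zero.2 hne)
      fun φ hφ => mem_traceOrthogonal_direction fun s hs => ?_)
    have hmem : s (x₁ - x₂) ∈ N₁ ⊔ N₂ := by
      have hdiff : s (x₁ - x₂) = -(F ⟨s, hs⟩ - s x₁) + (F ⟨s, hs⟩ - s x₂) := by
        rw [map_sub]; abel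
      exact hdiff ▸ Submodule.add_mem_sup (N₁.neg_mem (h₁ ⟨s, hs⟩)) (h₂ ⟨s, hs⟩)
    rw [tracePairing_smulRight, (Submodule.mem_dualAnnihilator φ).1 hφ _ hmem]
  exact ⟨x₁, fun s => ⟨h₁ s, hx ▸ h₂ s⟩⟩

theorem isLocalMod_of_isLocalMod_sup_span_singleton {F : 𝒮 → V} (hd : d ∉ N)
    (hN : finrank K N + 3 ≤ finrank K V)
    (hsmall : ∀ E : Submodule K V, E ≠ ⊤ → ∃ y ∉ E, HasSmallCodimMod 𝒮.direction (N ⊔ K ∙ y))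
    (hloc : ∀ y ∉ N, d ∉ N ⊔ K ∙ y → HasSmallCodimMod 𝒮.direction (N ⊔ K ∙ y) →
      IsLocalMod F (N ⊔ K ∙ y)) : IsLocalMod F N := by
  have hNd := Submodule.finrank_sup_span_singleton hd
  obtain ⟨y, hy, hysmall⟩ := hsmall (N ⊔ K ∙ d) fun h => by
    rw [h, finrank_top] at hNd; omega
  have hyN : y ∉ N := fun h => hy (Submodule.mem_sup_left h)
  have hNdy := Submodule.finrank_sup_span_singleton hy
  obtain ⟨z, hz, hzsmall⟩ := hsmall (N ⊔ K ∙ d ⊔ K ∙ y) fun h => by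
    rw [h, finrank_top] at hNdy; omega
  have hzd : z ∉ N ⊔ K ∙ d := fun h => hz (Submodule.mem_sup_left h)
  have hzy : z ∉ N ⊔ K ∙ y := fun h => hz (sup_le_sup_right (le_sup_left : N ≤ N ⊔ K ∙ d) _ h)
  have hzN : z ∉ N := fun h => hzd (Submodule.mem_sup_left h)
  rw [← sup_span_singleton_inf_sup_span_singleton hzy]
  refine (hloc y hyN (notMem_sup_span_singleton_comm hd hy) hysmall).inf
    (hloc z hzN (notMem_sup_span_singleton_comm hd hzd) hzsmall) ?_
  have hsup : N ⊔ K ∙ y ⊔ (N ⊔ K ∙ z) = N ⊔ K ∙ y ⊔ K ∙ z := by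
    rw [← sup_sup_distrib_left, sup_assoc]
  have hdim := Submodule.finrank_sup_span_singleton hzy
  have hmono := Submodule.finrank_mono
    (traceOrthogonalMod_anti 𝒮.direction (le_sup_left (a := N ⊔ K ∙ y) (b := K ∙ z)))
  rw [hsup]
  unfold HasSmallCodimMod at hysmall
  omega

theorem exists_notMem_hasSmallCodimMod_sup_span_singleton {W : Submodule K (U →ₗ[K] V)}
    (hN : finrank K N + 3 ≤ finrank K V) (hsmall : HasSmallCodimMod W N)
    {E : Submodule K V} (hE : E ≠ ⊤) : ∃ y ∉ E, HasSmallCodimMod W (N ⊔ K ∙ y) := by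
  have hrank : ∀ y, finrank K ↥(N ⊔ K ∙ y) ≤ finrank K N + 1 := fun y =>
    (Submodule.finrank_add_le_finrank_add_finrank _ _).trans
      (Nat.add_le_add_left (finrank_span_singleton_le_one y) _)
  unfold HasSmallCodimMod at hsmall ⊢
  by_cases hbot : traceOrthogonalMod W N = ⊥
  · obtain ⟨y, -, hy⟩ := SetLike.exists_of_lt hE.lt_top
    have hybot := le_bot_iff.1 (hbot ▸ traceOrthogonalMod_anti W (le_sup_left (b := K ∙ y)))
    refine ⟨y, hy, ?_⟩
    have := hrank y
    rw [hybot, finrank_bot]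
    omega
  · obtain ⟨t, ht, ht0⟩ := Submodule.exists_mem_ne_zero_of_ne_bot hbot
    obtain ⟨y, hy, hty⟩ := exists_notMem_apply_ne_zero hE ht0
    have hlt : traceOrthogonalMod W (N ⊔ K ∙ y) < traceOrthogonalMod W N :=
      SetLike.lt_iff_le_and_exists.2 ⟨traceOrthogonalMod_anti W le_sup_left, t, ht, fun h =>
        hty (h.2 (Submodule.mem_sup_right (Submodule.mem_span_singleton_self y)))⟩
    have := Submodule.finrank_lt_finrank_of_lt hlt
    have := hrank y
    exact ⟨y, hy, by omega⟩

variable [Nonempty 𝒮] {F : 𝒮 →ᵃ[K] V}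

theorem exists_forall_dual_apply_eq (hF : IsQuasiRangeCompatible d F) {φ : Dual K V}
    (hd : φ d ≠ 0) (hφ : ∀ x : U, φ.smulRight x ∈ traceOrthogonal 𝒮.direction → x = 0) :
    ∃ x : U, ∀ s : 𝒮, φ (F s) = φ (s.1 x) := by
  let g : 𝒮 →ᵃ[K] Dual K U := (LinearMap.compRight K φ).toAffineMap.comp 𝒮.subtype
  have hg : Function.Surjective g := by
    refine g.linear_surjective_iff.1 (LinearMap.range_eq_top.1 ?_)
    rw [← map_compRight_eq_top hφ, ← LinearMap.range_domRestrict]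
    rfl
  have hgF : ∀ s, g s = 0 → (φ.toAffineMap.comp F) s = 0 := fun s hs => by
    have hrange : LinearMap.range s.1 ≤ LinearMap.ker φ := LinearMap.range_le_ker_iff.2 hs
    exact hrange (hF s fun hds => hd (hrange hds))
  obtain ⟨l, hl⟩ := exists_linearMap_comp_eq_of_surjective hg hgF
  refine ⟨(evalEquiv K U).symm l, fun s => (hl s).trans ?_⟩
  exact (apply_evalEquiv_symm_apply K U (g s) l).symm

theorem isLocalMod_ker_inf_ker (hF : IsQuasiRangeCompatible d F) {φ ψ : Dual K V}
    (hφd : φ d = 1) (hψd : ψ d = 0)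
    (hinj : ∀ (c : K) (x : U), (φ + c • ψ).smulRight x ∈ traceOrthogonal 𝒮.direction → x = 0)
    (hzero : ∀ w : U, (∀ c : K, ∃ u v : U,
      φ.smulRight u + ψ.smulRight v ∈ traceOrthogonal 𝒮.direction ∧
        c • u - v = (c * (1 - c)) • w) → w = 0) :
    IsLocalMod F (LinearMap.ker φ ⊓ LinearMap.ker ψ) := by
  have hpencil : ∀ c : K, ∃ x : U, ∀ s : 𝒮, (φ + c • ψ) (F s) = (φ + c • ψ) (s.1 x) := fun c =>
    exists_forall_dual_apply_eq hF (by simp [hφd, hψd]) (hinj c)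
  obtain ⟨x₀, h₀⟩ := hpencil 0
  obtain ⟨x₁, h₁⟩ := hpencil 1
  rw [zero_smul, add_zero] at h₀
  rw [one_smul] at h₁
  have hx : x₀ = x₁ := sub_eq_zero.1 <| hzero _ fun c => by
    obtain ⟨x, hx⟩ := hpencil c
    exact exists_smulRight_add_smulRight_mem_traceOrthogonal h₀ h₁ hx
  subst hx
  refine ⟨x₀, fun s => ⟨?_, ?_⟩⟩
  · simpa [sub_eq_zero] using h₀ s
  · simpa [sub_eq_zero, h₀ s] using h₁ s

theorem isLocalMod_of_traceOrthogonalMod_eq_bot (hK : 2 < Cardinal.mk K)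
    (hF : IsQuasiRangeCompatible d F) (hd : d ∉ N) (hN : finrank K N + 2 = finrank K V)
    (hbot : traceOrthogonalMod 𝒮.direction N = ⊥) : IsLocalMod F N := by
  obtain ⟨φ, ψ, hφd, hψd, hψ0, rfl⟩ := exists_ker_inf_ker_eq hN hd
  have htensor : ∀ u v : U, φ.smulRight u + ψ.smulRight v ∈ traceOrthogonal 𝒮.direction →
      u = 0 ∧ v = 0 := by
    intro u v huv
    refine eq_zero_of_smulRight_add_smulRight_eq_zero hφd hψd hψ0 ((Submodule.mem_bot K).1 ?_)
    refine hbot ▸ mem_traceOrthogonalMod.2 ⟨huv, fun y hy => ?_⟩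
    simp [LinearMap.mem_ker.1 hy.1, LinearMap.mem_ker.1 hy.2]
  refine isLocalMod_ker_inf_ker hF hφd hψd (fun c x hx => ?_) fun w hw => ?_
  · have hsplit : (φ + c • ψ).smulRight x = φ.smulRight x + ψ.smulRight (c • x) := by
      ext y; simp [add_smul, smul_smul, mul_comm]
    exact (htensor x (c • x) (hsplit ▸ hx)).1
  · obtain ⟨c, hc0, hc1⟩ := exists_ne_zero_ne_one hK
    obtain ⟨u, v, huv, hw⟩ := hw c
    obtain ⟨rfl, rfl⟩ := htensor u v huv
    simpa [hc0, sub_eq_zero, hc1.symm] using hw.symm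

theorem HasSmallCodimMod.isLocalMod (hK : 2 < Cardinal.mk K) (hF : IsQuasiRangeCompatible d F)
    (hsmall : HasSmallCodimMod 𝒮.direction N) (hd : d ∉ N) : IsLocalMod F N := by
  induction N using WellFoundedGT.induction with
  | ind N ih =>
  rcases (show finrank K N + 2 ≤ finrank K V from
    (Nat.add_le_add_right (Nat.le_add_right _ _) 2).trans hsmall).eq_or_lt with hN | hN
  · refine isLocalMod_of_traceOrthogonalMod_eq_bot hK hF hd hN (Submodule.finrank_eq_zero.1 ?_)
    unfold HasSmallCodimMod at hsmall
    omega
  · exact isLocalMod_of_isLocalMod_sup_span_singleton hd hN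
      (fun _ => exists_notMem_hasSmallCodimMod_sup_span_singleton hN hsmall)
      fun y hy hdy hysmall => ih _ (left_lt_sup.2 fun h =>
        hy (h (Submodule.mem_span_singleton_self y))) hysmall hdy

theorem isLocalMod_bot_of_three_le_finrank (hK : 2 < Cardinal.mk K)
    (hF : IsQuasiRangeCompatible d F) (hd : d ≠ 0) (hV : 3 ≤ finrank K V)
    (hT : finrank K (traceOrthogonal 𝒮.direction) + 1 = finrank K V)
    (hrange : ¬ ∃ x : U, ∀ t ∈ traceOrthogonal 𝒮.direction, LinearMap.range t ≤ K ∙ x) :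
    IsLocalMod F ⊥ := by
  refine isLocalMod_of_isLocalMod_sup_span_singleton (by simpa using hd) (by simpa using hV)
    (fun E hE => ?_) fun y _ hdy hsmall => hsmall.isLocalMod hK hF hdy
  by_contra! hall
  refine hrange (exists_range_le_span_singleton hK (by omega) hE fun y hy => ?_)
  have hlarge := hall y hy
  rw [bot_sup_eq, HasSmallCodimMod, traceOrthogonalMod_span_singleton] at hlarge
  have := finrank_inf_ker_add_finrank_map (traceOrthogonal 𝒮.direction) (LinearMap.applyₗ y)
  have := finrank_span_singleton_le_one (K := K) y
  omega

theorem isLocalMod_bot_of_finrank_eq_two (hK : 3 < Cardinal.mk K)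
    (hF : IsQuasiRangeCompatible d F) (hd : d ≠ 0) (hV : finrank K V = 2)
    (hT : finrank K (traceOrthogonal 𝒮.direction) = 1)
    (hrange : ¬ ∃ x : U, ∀ t ∈ traceOrthogonal 𝒮.direction, LinearMap.range t ≤ K ∙ x) :
    IsLocalMod F ⊥ := by
  obtain ⟨φ, ψ, hφd, hψd, hψ0, hker⟩ :=
    exists_ker_inf_ker_eq (N := (⊥ : Submodule K V)) (d := d) (by simp [hV]) (by simpa using hd)
  rw [← hker]
  refine isLocalMod_ker_inf_ker hF hφd hψd (fun c x hx => ?_) fun w hw =>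
    eq_zero_of_forall_pencil_mem hK hT hrange hφd hψd hψ0 hw
  by_contra hx0
  have hne : (φ + c • ψ).smulRight x ≠ 0 := fun h =>
    hx0 (by simpa [hφd, hψd] using LinearMap.congr_fun h d)
  refine hrange ⟨x, fun t ht => (range_le_of_finrank_le_one hT.le hx hne ht).trans ?_⟩
  rintro _ ⟨y, rfl⟩
  exact Submodule.smul_mem _ _ (Submodule.mem_span_singleton_self x)

end AffineMaps

end QuasiRangeCompatible

open QuasiRangeCompatible

/-- Let `𝒮` be an affine subspace of `L(U,V)` with
`codim 𝒮 = dim V − 1`. Assume that either `dim V ≥ 3` and `K` has more than 2 elements,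
or `dim V ≥ 2` and `K` has more than 3 elements. Then either every
quasi-range-compatible affine map `F : 𝒮 → V` is local, or there is a vector `x ∈ U`
such that the affine subspace `𝒮x = {s x : s ∈ 𝒮}` of `V` has dimension 1 (i.e. its
direction has dimension 1). -/
theorem quasi_range_compatible_affine_maps_local_or_special
    (K U V : Type*) [Field K]
    [AddCommGroup U] [Module K U] [FiniteDimensional K U]
    [AddCommGroup V] [Module K V] [FiniteDimensional K V]
    (𝒮 : AffineSubspace K (U →ₗ[K] V)) [Nonempty ↥𝒮]
    (hcodim : Module.finrank K (U →ₗ[K] V) + 1 =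
      Module.finrank K 𝒮.direction + Module.finrank K V)
    (hcase : (3 ≤ Module.finrank K V ∧ 2 < Cardinal.mk K) ∨
      (2 ≤ Module.finrank K V ∧ 3 < Cardinal.mk K)) :
    (∀ F : ↥𝒮 →ᵃ[K] V,
      (∃ D : Submodule K V, Module.finrank K D = 1 ∧
        ∀ s : ↥𝒮, ¬ D ≤ LinearMap.range (s : U →ₗ[K] V) →
          F s ∈ LinearMap.range (s : U →ₗ[K] V)) →
      ∃ x : U, ∀ s : ↥𝒮, F s = (s : U →ₗ[K] V) x) ∨
    (∃ x : U, Module.finrank K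
      (AffineSubspace.map (LinearMap.applyₗ x).toAffineMap 𝒮).direction = 1) := by
  have hT : finrank K (traceOrthogonal 𝒮.direction) + 1 = finrank K V := by
    have := finrank_add_finrank_traceOrthogonal 𝒮.direction
    omega
  by_cases hrange : ∃ x : U, ∀ t ∈ traceOrthogonal 𝒮.direction, LinearMap.range t ≤ K ∙ x
  · obtain ⟨x, hx⟩ := hrange
    have hx0 : x ≠ 0 :=
      ne_zero_of_forall_range_le_span_singleton (Submodule.one_le_finrank_iff.1 (by omega)) hx
    have := finrank_map_applyₗ_add_finrank_traceOrthogonal hx0 hx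
    exact .inr ⟨x, by rw [AffineSubspace.map_direction, LinearMap.toAffineMap_linear]; omega⟩
  · refine .inl fun F ⟨D, hD, hF⟩ => isLocalMod_bot_iff.1 ?_
    obtain ⟨d, hdD, hd0⟩ := Submodule.exists_mem_ne_zero_of_ne_bot
      (Submodule.one_le_finrank_iff.1 hD.ge)
    have hFd : IsQuasiRangeCompatible d F := fun s hs => hF s fun hle => hs (hle hdD)
    rcases le_or_gt 3 (finrank K V) with hV | hV
    · have hK : 2 < Cardinal.mk K := hcase.elim (·.2) (lt_trans (by norm_num) ·.2)
      exact isLocalMod_bot_of_three_le_finrank hK hFd hd0 hV hT hrange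
    · obtain ⟨hV2, hK⟩ := hcase.resolve_left fun h => hV.not_ge h.1
      exact isLocalMod_bot_of_finrank_eq_two hK hFd hd0 (by omega) (by omega) hrange
end

section
/- Let K be a field with more than 2 elements, U and V finite-dimensional K-vector spaces with dim V ≥ 2, and 𝒮 an affine subspace of L(U,V) with codim 𝒮 = dim V − 1. Assume there is a vector x ∈ U such that the affine subspace 𝒮x = {s(x) : s ∈ 𝒮} of V has dimension 1 and is not a linear subspace of V. Let F : 𝒮 → V be a non-local affine map that is quasi-range-compatible with respect to some 1-dimensional linear subspace D₀ of V. Then: (i) K has exactly 3 elements; (ii) D₀ ∩ 𝒮x ≠ ∅; (iii) there is a vector x' ∈ U such that F(s) − s(x') ∈ span(𝒮x) for all s ∈ 𝒮; (iv) if dim V > 2, then there exist a K-linear endomorphism ψ of span(𝒮x) and a vector x' ∈ U such that F(s) = ψ(s(x)) + s(x') for all s ∈ 𝒮. -/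
attribute [local instance] AffineSubspace.toAddTorsor

/-!
Since `0 ∉ 𝒮`, the map `F` extends to a linear map `Φ` on `L(U, V)`, and the codimension condition
says that `𝒮` consists of all operators `s` with `s x` in the affine line `A = 𝒮x`.

Choose a linear form `φ` with `φ x = 1`. For `p ∈ A` and `f x = 0`, testing the hypothesis on the
operators `φ ⊗ p` and `φ ⊗ p + f ⊗ y` shows that `Φ (φ ⊗ p) ∈ span {p}` and
`Φ (f ⊗ y) ∈ span {p, y}` as long as those spans do not contain `D₀`. If `dim V > 2`, the second
condition makes `y ↦ Φ (f ⊗ y)` scalar modulo `span {p}` for each of two distinct points `p` of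
`A \ D₀`, hence scalar; then `Φ s = Φ (φ ⊗ s x) + s u` for some `u`. If `dim V = 2`, the same
holds as soon as `A \ D₀` has three points, because an endomorphism of a plane with three
eigenlines is scalar. With three points, `y ↦ Φ (φ ⊗ y)` is likewise scalar on `span A`, and `Φ` is
local on `𝒮`. Since `A` meets `D₀` in at most one point, a non-local `F` forces `A` to have exactly
three points, one of them in `D₀`.
-/

namespace QuasiRangeCompatible

open Module Submodule

variable {K U V : Type*} [Field K] [AddCommGroup U] [Module K U] [AddCommGroup V] [Module K V]

section AffineLine

section Torsor

variable {P : Type*} [AddTorsor V P] {A : AffineSubspace K P}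

theorem affineSpan_pair_eq_of_finrank_direction_eq_one (hA : finrank K A.direction = 1) {p q : P}
    (hp : p ∈ A) (hq : q ∈ A) (hpq : p ≠ q) : line[K, p, q] = A := by
  have : FiniteDimensional K A.direction := .of_finrank_pos (by simp [hA])
  have hle : line[K, p, q] ≤ A := affineSpan_pair_le_of_mem_of_mem hp hq
  refine AffineSubspace.eq_of_direction_eq_of_nonempty_of_le ?_
    ⟨p, left_mem_affineSpan_pair K p q⟩ hle
  refine eq_of_le_of_finrank_eq (AffineSubspace.direction_le hle) ?_
  rw [hA, direction_affineSpan, vectorSpan_pair, finrank_span_singleton (vsub_ne_zero.2 hpq)]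

theorem coe_nontrivial_of_finrank_direction_eq_one (hA : finrank K A.direction = 1) :
    (A : Set P).Nontrivial := by
  rw [← Set.not_subsingleton_iff]
  intro hsub
  rw [AffineSubspace.direction_eq_vectorSpan, vectorSpan_of_subsingleton K hsub,
    finrank_bot] at hA
  exact zero_ne_one hA

theorem encard_coe_of_finrank_direction_eq_one (hA : finrank K A.direction = 1) :
    (A : Set P).encard = ENat.card K := by
  obtain ⟨p, hp, q, hq, hpq⟩ := coe_nontrivial_of_finrank_direction_eq_one hA
  have hrange : Set.range (AffineMap.lineMap p q : K → P) = A := by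
    rw [← affineSpan_pair_eq_of_finrank_direction_eq_one hA hp hq hpq]
    exact Set.ext fun r ↦ mem_affineSpan_pair_iff_exists_lineMap_eq.symm
  rw [← hrange, ← Set.image_univ, (AffineMap.lineMap_injective K hpq).encard_image,
    Set.encard_univ]

end Torsor

theorem linearIndependent_pair_of_zero_notMem_affineSpan {p q : V} (hpq : p ≠ q)
    (h0 : (0 : V) ∉ line[K, p, q]) : LinearIndependent K ![p, q] := by
  rw [LinearIndependent.pair_iff]
  intro a b hab
  have hsum : a + b = 0 := by
    by_contra hne
    refine h0 (mem_affineSpan_pair_iff_exists_lineMap_eq.2 ⟨(a + b)⁻¹ * b, ?_⟩)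
    rw [← smul_right_inj hne, smul_zero, ← hab, AffineMap.lineMap_apply_module, smul_add,
      smul_smul, smul_smul, mul_sub, mul_inv_cancel_left₀ hne, mul_one, add_sub_cancel_right]
  obtain rfl : b = -a := (neg_eq_of_add_eq_zero_right hsum).symm
  have ha : a • (p - q) = 0 := by rw [← hab]; module
  simpa [sub_ne_zero.2 hpq] using ha

theorem finrank_span_pair {p q : V} (h : LinearIndependent K ![p, q]) :
    finrank K (span K {p, q}) = 2 := by
  rw [← Matrix.range_cons_cons_empty, finrank_span_eq_card h, Fintype.card_fin]

variable {A : AffineSubspace K V} {D : Submodule K V} {p q : V}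

theorem linearIndependent_pair_of_mem (hA : finrank K A.direction = 1) (h0 : (0 : V) ∉ A)
    (hp : p ∈ A) (hq : q ∈ A) (hpq : p ≠ q) : LinearIndependent K ![p, q] :=
  linearIndependent_pair_of_zero_notMem_affineSpan hpq
    (by rwa [affineSpan_pair_eq_of_finrank_direction_eq_one hA hp hq hpq])

theorem span_pair_eq_span_coe (hA : finrank K A.direction = 1) (hp : p ∈ A) (hq : q ∈ A)
    (hpq : p ≠ q) : span K {p, q} = span K (A : Set V) := by
  refine le_antisymm (span_mono (Set.pair_subset hp hq)) (span_le.2 ?_)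
  rw [← affineSpan_pair_eq_of_finrank_direction_eq_one hA hp hq hpq]
  exact affineSpan_subset_span

theorem finrank_span_coe (hA : finrank K A.direction = 1) (h0 : (0 : V) ∉ A) :
    finrank K (span K (A : Set V)) = 2 := by
  obtain ⟨p, hp, q, hq, hpq⟩ := coe_nontrivial_of_finrank_direction_eq_one hA
  rw [← span_pair_eq_span_coe hA hp hq hpq,
    finrank_span_pair (linearIndependent_pair_of_mem hA h0 hp hq hpq)]

theorem coe_inter_subsingleton (hA : finrank K A.direction = 1) (h0 : (0 : V) ∉ A)
    (hD : finrank K D = 1) : ((A : Set V) ∩ D).Subsingleton := by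
  rintro p ⟨hpA, hpD⟩ q ⟨hqA, hqD⟩
  by_contra hpq
  have : FiniteDimensional K D := .of_finrank_pos (by simp [hD])
  have hle := finrank_mono (span_le.2 (Set.pair_subset hpD hqD))
  rw [finrank_span_pair (linearIndependent_pair_of_mem hA h0 hpA hqA hpq)] at hle
  lia

theorem card_le_encard_coe_sdiff_add_one (hA : finrank K A.direction = 1) (h0 : (0 : V) ∉ A)
    (hD : finrank K D = 1) : ENat.card K ≤ ((A : Set V) \ D).encard + 1 := by
  rw [← encard_coe_of_finrank_direction_eq_one hA,
    ← Set.encard_sdiff_add_encard_inter (A : Set V) D]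
  gcongr
  exact Set.encard_le_one_iff_subsingleton.2 (coe_inter_subsingleton hA h0 hD)

theorem coe_sdiff_nontrivial (hK : 3 ≤ ENat.card K) (hA : finrank K A.direction = 1)
    (h0 : (0 : V) ∉ A) (hD : finrank K D = 1) : ((A : Set V) \ D).Nontrivial := by
  have h : (2 : ℕ∞) + 1 ≤ ((A : Set V) \ D).encard + 1 :=
    hK.trans (card_le_encard_coe_sdiff_add_one hA h0 hD)
  exact Set.one_lt_encard_iff_nontrivial.1 <|
    (by norm_num : (1 : ℕ∞) < 2).trans_le ((ENat.add_le_add_iff_right ENat.one_ne_top).1 h)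

theorem three_le_encard_coe_sdiff (hK : 3 ≤ ENat.card K) (hA : finrank K A.direction = 1)
    (h0 : (0 : V) ∉ A) (hD : finrank K D = 1)
    (h : ¬ (Nat.card K = 3 ∧ ((D : Set V) ∩ A).Nonempty)) :
    3 ≤ ((A : Set V) \ D).encard := by
  rcases ((D : Set V) ∩ A).eq_empty_or_nonempty with hempty | hne
  · rwa [(Set.disjoint_iff_inter_eq_empty.2 hempty).symm.sdiff_eq_left,
      encard_coe_of_finrank_direction_eq_one hA]
  · have hK3 : (3 : ℕ∞) ≠ ENat.card K := fun hK3 ↦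
      h ⟨by rw [← Set.ncard_univ, Set.ncard_def, Set.encard_univ, ← hK3]; rfl, hne⟩
    have h4 : (3 : ℕ∞) + 1 ≤ ((A : Set V) \ D).encard + 1 :=
      (Order.add_one_le_of_lt (hK.lt_of_ne hK3)).trans (card_le_encard_coe_sdiff_add_one hA h0 hD)
    exact (ENat.add_le_add_iff_right ENat.one_ne_top).1 h4

theorem exists_three_mem_of_three_le_encard {α : Type*} {s : Set α} (hs : 3 ≤ s.encard) :
    ∃ p q r, p ≠ q ∧ p ≠ r ∧ q ≠ r ∧ {p, q, r} ⊆ s := by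
  obtain ⟨t, ht, htcard⟩ := Set.exists_subset_encard_eq hs
  obtain ⟨p, q, r, hpq, hpr, hqr, rfl⟩ := Set.encard_eq_three.1 htcard
  exact ⟨p, q, r, hpq, hpr, hqr, ht⟩

end AffineLine

section Homothety

theorem exists_forall_mem_span_pair_eq_smul {p q r : V} (hpq : LinearIndependent K ![p, q])
    (hr : r ∈ line[K, p, q]) (hrp : r ≠ p) (hrq : r ≠ q) {g : V →ₗ[K] V}
    (hgp : g p ∈ span K {p}) (hgq : g q ∈ span K {q}) (hgr : g r ∈ span K {r}) :
    ∃ c : K, ∀ y ∈ span K {p, q}, g y = c • y := by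
  obtain ⟨t, rfl⟩ := mem_affineSpan_pair_iff_exists_lineMap_eq.1 hr
  obtain ⟨a, ha⟩ := mem_span_singleton.1 hgp
  obtain ⟨b, hb⟩ := mem_span_singleton.1 hgq
  obtain ⟨c, hc⟩ := mem_span_singleton.1 hgr
  have ht0 : t ≠ 0 := by rintro rfl; simp at hrp
  have ht1 : 1 - t ≠ 0 := fun h ↦ hrq (by simp [← sub_eq_zero.1 h])
  rw [AffineMap.lineMap_apply_module, map_add, map_smul, map_smul, ← ha, ← hb] at hc
  obtain ⟨hac, hbc⟩ := LinearIndependent.pair_iff.1 hpq ((1 - t) * (c - a)) (t * (c - b)) (by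
    linear_combination (norm := module) hc)
  obtain rfl : c = a := by simpa [ht1, sub_eq_zero] using hac
  obtain rfl : c = b := by simpa [ht0, sub_eq_zero] using hbc
  refine ⟨c, fun y hy ↦ ?_⟩
  obtain ⟨m, n, rfl⟩ := mem_span_pair.1 hy
  rw [map_add, map_smul, map_smul, ← ha, ← hb]
  module

theorem exists_forall_mem_span_coe_eq_smul {A : AffineSubspace K V}
    (hA : finrank K A.direction = 1) (h0 : (0 : V) ∉ A) {B : Set V} (hBA : B ⊆ A)
    (hB : 3 ≤ B.encard) {g : V →ₗ[K] V} (hg : ∀ y ∈ B, g y ∈ span K {y}) :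
    ∃ c : K, ∀ y ∈ span K (A : Set V), g y = c • y := by
  obtain ⟨p, q, r, hpq, hpr, hqr, hpqr⟩ := exists_three_mem_of_three_le_encard hB
  obtain ⟨hp, hq, hr⟩ : p ∈ B ∧ q ∈ B ∧ r ∈ B := by simpa [Set.insert_subset_iff] using hpqr
  have hrline : r ∈ line[K, p, q] := by
    rw [affineSpan_pair_eq_of_finrank_direction_eq_one hA (hBA hp) (hBA hq) hpq]
    exact hBA hr
  rw [← span_pair_eq_span_coe hA (hBA hp) (hBA hq) hpq]
  exact exists_forall_mem_span_pair_eq_smul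
    (linearIndependent_pair_of_mem hA h0 (hBA hp) (hBA hq) hpq) hrline hpr.symm hqr.symm
    (hg p hp) (hg q hq) (hg r hr)

theorem linearIndependent_pair_of_notMem {D : Submodule K V} {w y : V} (hw : w ∉ D) (hy : y ∈ D)
    (hy0 : y ≠ 0) : LinearIndependent K ![w, y] := by
  rw [LinearIndependent.pair_symm_iff, LinearIndependent.pair_iff' hy0]
  rintro a rfl
  exact hw (D.smul_mem a hy)

theorem map_mem_span_singleton_of_forall_add_smul (hK : 3 ≤ ENat.card K) {w y : V}
    (hwy : LinearIndependent K ![w, y]) {g : V →ₗ[K] V}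
    (hg : ∀ e : K, g (w + e • y) ∈ span K {w + e • y}) : g y ∈ span K {y} := by
  have hy : y ≠ 0 := hwy.ne_zero 1
  obtain ⟨t, ht0, ht1⟩ := ENat.exists_ne_ne_of_three_le hK (0 : K) 1
  have hline : w + t • y ∈ line[K, w, w + y] := by
    refine mem_affineSpan_pair_iff_exists_lineMap_eq.2 ⟨t, ?_⟩
    rw [AffineMap.lineMap_apply_module', add_sub_cancel_left, add_comm]
  have hne : w + t • y ≠ w + y := fun h ↦
    ht1 (smul_left_injective K hy (by simpa using h))
  obtain ⟨c, hc⟩ := exists_forall_mem_span_pair_eq_smul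
    (LinearIndependent.pair_add_right_iff.2 hwy) hline (by simp [ht0, hy]) hne
    (by simpa using hg 0) (by simpa using hg 1) (hg t)
  have hmem : y ∈ span K {w, w + y} :=
    mem_span_pair.2 ⟨-1, 1, by module⟩
  exact mem_span_singleton.2 ⟨c, (hc y hmem).symm⟩

theorem exists_eq_smul_one_of_forall_notMem (hK : 3 ≤ ENat.card K) {D : Submodule K V}
    (hD : D ≠ ⊤) {g : V →ₗ[K] V} (hg : ∀ y ∉ D, g y ∈ span K {y}) : ∃ c : K, g = c • 1 := by
  obtain ⟨w, -, hw⟩ := SetLike.exists_of_lt hD.lt_top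
  have hg_all (y : V) : g y ∈ span K {y} := by
    by_cases hyD : y ∈ D
    · rcases eq_or_ne y 0 with rfl | hy
      · simp
      · refine map_mem_span_singleton_of_forall_add_smul hK
          (linearIndependent_pair_of_notMem hw hyD hy) fun e ↦ hg _ fun h ↦ ?_
        exact hw ((D.add_mem_iff_left (D.smul_mem e hyD)).1 h)
    · exact hg y hyD
  refine LinearMap.exists_eq_smul_id_of_forall_notLinearIndependent fun y hli ↦ ?_
  obtain ⟨a, ha⟩ := mem_span_singleton.1 (hg_all y)
  simpa using (LinearIndependent.pair_iff.1 hli (-a) 1 (by simp [ha])).2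

theorem not_le_span_singleton {D : Submodule K V} (hD : D ≠ ⊥) {p : V} (hp : p ∉ D) :
    ¬ D ≤ span K {p} := by
  intro hle
  have hp0 : p ≠ 0 := fun h ↦ hp (h ▸ D.zero_mem)
  rcases (nonzero_span_atom p hp0).le_iff.1 hle with h | h
  · exact hD h
  · exact hp (h ▸ mem_span_singleton_self p)

theorem exists_forall_sub_smul_mem_span_singleton (hK : 3 ≤ ENat.card K) {D : Submodule K V}
    (hD : D ≠ ⊥) {p : V} (hp : p ∉ D) (htop : span K {p} ⊔ D ≠ ⊤) {g : V →ₗ[K] V}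
    (hg : ∀ y, ¬ D ≤ span K {p, y} → g y ∈ span K {p, y}) :
    ∃ c : K, ∀ y, g y - c • y ∈ span K {p} := by
  have hDp : ¬ D ≤ span K {p} := not_le_span_singleton hD hp
  set L := span K {p} with hL
  have hgL : L ≤ L.comap g := by
    rw [hL, span_singleton_le_iff_mem, mem_comap]
    simpa [hL] using hg p (by simpa using hDp)
  have hmap (y : V) : (span K {p, y}).map L.mkQ = span K {L.mkQ y} := by
    have hp0 : L.mkQ p = 0 := (Quotient.mk_eq_zero L).2 (mem_span_singleton_self p)
    rw [map_span, Set.image_pair, hp0, span_insert_zero]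
  have hquot : ∀ z ∉ D.map L.mkQ, L.mapQ L g hgL z ∈ span K {z} := by
    intro z hz
    obtain ⟨y, rfl⟩ := L.mkQ_surjective z
    have hDy : ¬ D ≤ span K {p, y} := fun hle ↦
      not_le_span_singleton (fun h ↦ hDp (by simpa using LinearMap.le_ker_iff_map.2 h)) hz
        (hmap y ▸ map_mono hle)
    exact hmap y ▸ mem_map_of_mem (hg y hDy)
  obtain ⟨c, hc⟩ := exists_eq_smul_one_of_forall_notMem hK
    (mt (map_mkQ_eq_top ..).1 htop) hquot
  refine ⟨c, fun y ↦ ?_⟩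
  rw [← Quotient.mk_eq_zero, Quotient.mk_sub, Quotient.mk_smul, sub_eq_zero]
  exact LinearMap.congr_fun hc (L.mkQ y)

theorem sup_ne_top_of_finrank_eq_one (hV : 2 < finrank K V) {L L' : Submodule K V}
    (hL : finrank K L = 1) (hL' : finrank K L' = 1) : L ⊔ L' ≠ ⊤ := by
  intro htop
  have : FiniteDimensional K V := .of_finrank_pos (by lia)
  have hle := finrank_add_le_finrank_add_finrank L L'
  rw [htop, finrank_top] at hle
  lia

theorem disjoint_span_singleton_of_linearIndependent {p q : V}
    (h : LinearIndependent K ![p, q]) : Disjoint (span K {p}) (span K {q}) := by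
  refine (disjoint_span_singleton' (h.ne_zero 1)).2 fun hq ↦ ?_
  obtain ⟨a, ha⟩ := mem_span_singleton.1 hq
  exact (LinearIndependent.pair_iff' (h.ne_zero 0)).1 h a ha

theorem eq_smul_of_forall_sub_smul_mem {L L' : Submodule K V} (hdisj : Disjoint L L')
    (htop : L ⊔ L' ≠ ⊤) {g : V →ₗ[K] V} {c c' : K} (hc : ∀ y, g y - c • y ∈ L)
    (hc' : ∀ y, g y - c' • y ∈ L') (y : V) : g y = c • y := by
  obtain rfl : c = c' := by
    by_contra hne
    refine htop (eq_top_iff'.2 fun z ↦ ?_)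
    have hz : (c' - c) • z ∈ L ⊔ L' := by
      rw [show (c' - c) • z = (g z - c • z) - (g z - c' • z) by module]
      exact sub_mem (mem_sup_left (hc z)) (mem_sup_right (hc' z))
    exact ((L ⊔ L').smul_mem_iff (sub_ne_zero.2 (Ne.symm hne))).1 hz
  exact sub_eq_zero.1 (disjoint_def.1 hdisj _ (hc y) (hc' y))

end Homothety

section Local

variable [FiniteDimensional K U]

theorem linearMap_ext_smulRight {E : Type*} [AddCommGroup E] [Module K E]
    {Φ Ψ : (U →ₗ[K] V) →ₗ[K] E}
    (h : ∀ (f : Dual K U) (y : V), Φ (f.smulRight y) = Ψ (f.smulRight y)) : Φ = Ψ := by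
  refine (LinearMap.cancel_right (g := dualTensorHom K U V)
    (dualTensorHomEquiv K U V).surjective).1 (TensorProduct.ext' fun f y ↦ ?_)
  have hfy : dualTensorHom K U V (f ⊗ₜ y) = f.smulRight y := by ext; simp
  simpa only [LinearMap.comp_apply, hfy] using h f y

theorem exists_forall_eq_apply_of_forall_smulRight {Φ : (U →ₗ[K] V) →ₗ[K] V}
    (hΦ : ∀ f : Dual K U, ∃ c : K, ∀ y, Φ (f.smulRight y) = c • y) :
    ∃ u, ∀ s, Φ s = s u := by
  rcases subsingleton_or_nontrivial V with hV | hV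
  · exact ⟨0, fun s ↦ Subsingleton.elim _ _⟩
  obtain ⟨v, hv⟩ := exists_ne (0 : V)
  obtain ⟨χ, hχ⟩ := Module.Projective.exists_dual_eq_one K hv
  let Λ : Dual K (Dual K U) := χ ∘ₗ Φ ∘ₗ (LinearMap.smulRightₗ).flip v
  obtain ⟨u, hu⟩ := (evalEquiv K U).surjective Λ
  refine ⟨u, LinearMap.congr_fun (g := LinearMap.applyₗ u) (linearMap_ext_smulRight fun f y ↦ ?_)⟩
  obtain ⟨c, hc⟩ := hΦ f
  have hfu : f u = c := by
    have := LinearMap.congr_fun hu f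
    simpa [Λ, hc, hχ] using this
  simp [hc, hfu]

theorem exists_forall_eq_apply_smulRight_add {Φ : (U →ₗ[K] V) →ₗ[K] V} {x : U} {φ : Dual K U}
    (hφ : φ x = 1)
    (hΦ : ∀ f : Dual K U, f x = 0 → ∃ c : K, ∀ y, Φ (f.smulRight y) = c • y) :
    ∃ u, ∀ s, Φ s = Φ (φ.smulRight (s x)) + s u := by
  let π : U →ₗ[K] U := LinearMap.id - φ.smulRight x
  have hπ : π x = 0 := by simp [π, hφ]
  obtain ⟨u, hu⟩ := exists_forall_eq_apply_of_forall_smulRight (Φ := Φ ∘ₗ π.lcomp K V)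
    fun f ↦ hΦ (f ∘ₗ π) (by simp [hπ])
  refine ⟨u, fun s ↦ ?_⟩
  rw [← hu s, LinearMap.comp_apply, ← map_add]
  congr 1
  ext z
  simp [π]

end Local

section Reduction

variable {E : Type*} [AddCommGroup E] [Module K E]

theorem exists_linearMap_eq_of_zero_notMem {S : AffineSubspace K E} [Nonempty S]
    (h0 : (0 : E) ∉ S) (F : S →ᵃ[K] V) : ∃ Φ : E →ₗ[K] V, ∀ s : S, F s = Φ s := by
  obtain ⟨s₀⟩ := ‹Nonempty S›
  have hs₀ : (s₀ : E) ∉ S.direction := fun h ↦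
    h0 (by simpa using AffineSubspace.vadd_mem_of_mem_direction (neg_mem h) s₀.2)
  obtain ⟨Φ, hΦ, hΦ₀⟩ := LinearMap.exists_extend_of_notMem F.linear hs₀ (F s₀)
  refine ⟨Φ, fun s ↦ ?_⟩
  have hlin : Φ ((s : E) - s₀) = F s - F s₀ := by
    rw [← vsub_eq_sub, ← vsub_eq_sub, ← F.linearMap_vsub, ← hΦ]
    rfl
  rw [← sub_add_cancel (s : E) s₀, map_add, hlin, hΦ₀, sub_add_cancel]

theorem ker_le_of_finrank_add_finrank_map [FiniteDimensional K E] {T : E →ₗ[K] V}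
    (hT : Function.Surjective T) {W : Submodule K E}
    (h : finrank K E + finrank K (W.map T) = finrank K W + finrank K V) :
    LinearMap.ker T ≤ W := by
  have hE := T.finrank_range_add_finrank_ker
  have hW := (T.domRestrict W).finrank_range_add_finrank_ker
  rw [LinearMap.range_eq_top.2 hT, finrank_top] at hE
  rw [LinearMap.range_domRestrict, LinearMap.ker_domRestrict, ← finrank_map_subtype_eq,
    map_comap_subtype] at hW
  have hinf : W ⊓ LinearMap.ker T = LinearMap.ker T :=
    eq_of_le_of_finrank_eq inf_le_right (by lia)
  exact inf_eq_right.1 hinf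

theorem mem_iff_apply_mem_map [FiniteDimensional K E] {T : E →ₗ[K] V}
    (hT : Function.Surjective T) {S : AffineSubspace K E}
    (h : finrank K E + finrank K (S.map T.toAffineMap).direction =
      finrank K S.direction + finrank K V) {s : E} :
    s ∈ S ↔ T s ∈ S.map T.toAffineMap := by
  refine ⟨fun hs ↦ ⟨s, hs, rfl⟩, ?_⟩
  rintro ⟨r, hr, hrs⟩
  rw [AffineSubspace.map_direction] at h
  have hsr : s - r ∈ S.direction :=
    ker_le_of_finrank_add_finrank_map hT h (by simpa [sub_eq_zero] using hrs.symm)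
  simpa using AffineSubspace.vadd_mem_of_mem_direction hsr hr

theorem applyₗ_surjective {x : U} (hx : x ≠ 0) :
    Function.Surjective (LinearMap.applyₗ x : (U →ₗ[K] V) →ₗ[K] V) := by
  obtain ⟨φ, hφ⟩ := Module.Projective.exists_dual_eq_one K hx
  exact fun y ↦ ⟨φ.smulRight y, by simp [hφ]⟩

end Reduction

section RangeConstraints

/-- Quasi-range-compatibility with respect to `D`, imposed only on the operators in `S`, for a map
`Φ` defined on all of `L(U, V)`. -/
def IsQuasiRangeCompatibleOn (D : Submodule K V) (S : Set (U →ₗ[K] V)) (Φ : (U →ₗ[K] V) → V) :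
    Prop :=
  ∀ s ∈ S, ¬ D ≤ LinearMap.range s → Φ s ∈ LinearMap.range s

theorem IsQuasiRangeCompatibleOn.apply_mem {D W : Submodule K V} {S : Set (U →ₗ[K] V)}
    {Φ : (U →ₗ[K] V) → V} (hΦ : IsQuasiRangeCompatibleOn D S Φ) {s : U →ₗ[K] V} (hs : s ∈ S)
    (hsW : LinearMap.range s ≤ W) (hDW : ¬ D ≤ W) : Φ s ∈ W :=
  hsW (hΦ s hs fun hD ↦ hDW (hD.trans hsW))

variable {A : AffineSubspace K V} {D : Submodule K V} {x : U} {φ : Dual K U}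
  {Φ : (U →ₗ[K] V) →ₗ[K] V}

theorem apply_smulRight_mem_span_singleton (hΦ : IsQuasiRangeCompatibleOn D {s | s x ∈ A} Φ)
    (hφ : φ x = 1) {p : V} (hp : p ∈ A) (hDp : ¬ D ≤ span K {p}) :
    Φ (φ.smulRight p) ∈ span K {p} := by
  refine hΦ.apply_mem (by simpa [hφ] using hp) ?_ hDp
  rintro _ ⟨z, rfl⟩
  exact smul_mem _ _ (mem_span_singleton_self p)

theorem apply_smulRight_mem_span_pair (hΦ : IsQuasiRangeCompatibleOn D {s | s x ∈ A} Φ)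
    (hφ : φ x = 1) {f : Dual K U} (hf : f x = 0) {p y : V} (hp : p ∈ A)
    (hDpy : ¬ D ≤ span K {p, y}) : Φ (f.smulRight y) ∈ span K {p, y} := by
  have hpmem : p ∈ span K {p, y} := subset_span (Set.mem_insert p {y})
  have hymem : y ∈ span K {p, y} := subset_span (Set.mem_insert_of_mem p rfl)
  have hrank_one : Φ (φ.smulRight p) ∈ span K {p, y} := by
    refine hΦ.apply_mem (by simpa [hφ] using hp) ?_ hDpy
    rintro _ ⟨z, rfl⟩
    exact smul_mem _ _ hpmem
  have hrank_two : Φ (φ.smulRight p + f.smulRight y) ∈ span K {p, y} := by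
    refine hΦ.apply_mem (by simpa [hφ, hf] using hp) ?_ hDpy
    rintro _ ⟨z, rfl⟩
    exact add_mem (smul_mem _ _ hpmem) (smul_mem _ _ hymem)
  rw [map_add] at hrank_two
  exact ((span K {p, y}).add_mem_iff_right hrank_one).1 hrank_two

theorem exists_forall_apply_smulRight_eq_smul_of_two_lt_finrank (hK : 3 ≤ ENat.card K)
    (hV : 2 < finrank K V) (hA : finrank K A.direction = 1) (h0 : (0 : V) ∉ A)
    (hD : finrank K D = 1) (hΦ : IsQuasiRangeCompatibleOn D {s | s x ∈ A} Φ) (hφ : φ x = 1)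
    {f : Dual K U} (hf : f x = 0) : ∃ c : K, ∀ y, Φ (f.smulRight y) = c • y := by
  have hDbot : D ≠ ⊥ := by rintro rfl; simp at hD
  have hspan {p : V} (hp : p ∈ (A : Set V) \ D) : finrank K (span K {p}) = 1 :=
    finrank_span_singleton (ne_of_mem_of_not_mem hp.1 h0)
  have hscalar_mod {p : V} (hp : p ∈ (A : Set V) \ D) :
      ∃ c : K, ∀ y, Φ (f.smulRight y) - c • y ∈ span K {p} :=
    exists_forall_sub_smul_mem_span_singleton (g := Φ ∘ₗ LinearMap.smulRightₗ f) hK hDbot hp.2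
      (sup_ne_top_of_finrank_eq_one hV (hspan hp) hD)
      fun y hy ↦ apply_smulRight_mem_span_pair hΦ hφ hf hp.1 hy
  obtain ⟨p, hp, q, hq, hpq⟩ := coe_sdiff_nontrivial hK hA h0 hD
  obtain ⟨c, hc⟩ := hscalar_mod hp
  obtain ⟨c', hc'⟩ := hscalar_mod hq
  have hdisj := disjoint_span_singleton_of_linearIndependent
    (linearIndependent_pair_of_mem hA h0 hp.1 hq.1 hpq)
  exact ⟨c, eq_smul_of_forall_sub_smul_mem (g := Φ ∘ₗ LinearMap.smulRightₗ f) hdisj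
    (sup_ne_top_of_finrank_eq_one hV (hspan hp) (hspan hq)) hc hc'⟩

theorem exists_forall_apply_smulRight_eq_smul_of_three_le_encard (hA : finrank K A.direction = 1)
    (h0 : (0 : V) ∉ A) (htop : span K (A : Set V) = ⊤) (hD : D ≠ ⊥)
    (hAD : 3 ≤ ((A : Set V) \ D).encard) (hΦ : IsQuasiRangeCompatibleOn D {s | s x ∈ A} Φ)
    (hφ : φ x = 1) {f : Dual K U} (hf : f x = 0) :
    ∃ c : K, ∀ y, Φ (f.smulRight y) = c • y := by
  have hstable : ∀ r ∈ (A : Set V) \ D, Φ (f.smulRight r) ∈ span K {r} := fun r hr ↦ by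
    simpa using apply_smulRight_mem_span_pair (y := r) hΦ hφ hf hr.1
      (by simpa using not_le_span_singleton hD hr.2)
  obtain ⟨c, hc⟩ := exists_forall_mem_span_coe_eq_smul (g := Φ ∘ₗ LinearMap.smulRightₗ f)
    hA h0 Set.sdiff_subset hAD hstable
  exact ⟨c, fun y ↦ hc y (htop ▸ mem_top)⟩

theorem span_coe_eq_top_of_finrank_le_two [FiniteDimensional K V] (hV : finrank K V ≤ 2)
    (hA : finrank K A.direction = 1) (h0 : (0 : V) ∉ A) : span K (A : Set V) = ⊤ := by
  have hspan := finrank_span_coe hA h0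
  exact eq_top_of_finrank_eq (le_antisymm (finrank_le _) (hspan ▸ hV))

theorem card_eq_three_and_inter_nonempty_of_not_local [FiniteDimensional K U]
    [FiniteDimensional K V] (hK : 3 ≤ ENat.card K) (hA : finrank K A.direction = 1)
    (h0 : (0 : V) ∉ A) (hD : finrank K D = 1) (hΦ : IsQuasiRangeCompatibleOn D {s | s x ∈ A} Φ)
    (hlocal : ¬ ∃ u, ∀ s : U →ₗ[K] V, s x ∈ A → Φ s = s u) :
    Nat.card K = 3 ∧ ((D : Set V) ∩ A).Nonempty := by
  by_contra hcon
  have hx : x ≠ 0 := by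
    rintro rfl
    exact hlocal ⟨0, fun s hs ↦ absurd (map_zero s ▸ hs) h0⟩
  have hDbot : D ≠ ⊥ := by rintro rfl; simp at hD
  have hAD := three_le_encard_coe_sdiff hK hA h0 hD hcon
  obtain ⟨φ, hφ⟩ := Module.Projective.exists_dual_eq_one K hx
  have hscalar (f : Dual K U) (hf : f x = 0) : ∃ c : K, ∀ y, Φ (f.smulRight y) = c • y := by
    rcases lt_or_ge 2 (finrank K V) with hV | hV
    · exact exists_forall_apply_smulRight_eq_smul_of_two_lt_finrank hK hV hA h0 hD hΦ hφ hf
    · exact exists_forall_apply_smulRight_eq_smul_of_three_le_encard hA h0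
        (span_coe_eq_top_of_finrank_le_two hV hA h0) hDbot hAD hΦ hφ hf
  obtain ⟨u, hu⟩ := exists_forall_eq_apply_smulRight_add hφ hscalar
  obtain ⟨c, hc⟩ := exists_forall_mem_span_coe_eq_smul (g := Φ ∘ₗ LinearMap.smulRightₗ φ)
    hA h0 Set.sdiff_subset hAD fun r hr ↦
      apply_smulRight_mem_span_singleton hΦ hφ hr.1 (not_le_span_singleton hDbot hr.2)
  refine hlocal ⟨c • x + u, fun s hs ↦ ?_⟩
  rw [hu s, map_add, map_smul]
  exact congrArg (· + s u) (hc (s x) (subset_span hs))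

theorem exists_eq_apply_add_apply_of_two_lt_finrank [FiniteDimensional K U]
    (hK : 3 ≤ ENat.card K) (hV : 2 < finrank K V) (hA : finrank K A.direction = 1)
    (h0 : (0 : V) ∉ A) (hD : finrank K D = 1) (hΦ : IsQuasiRangeCompatibleOn D {s | s x ∈ A} Φ)
    (hx : x ≠ 0) :
    ∃ (ψ : V →ₗ[K] V) (u : U), (∀ y ∈ span K (A : Set V), ψ y ∈ span K (A : Set V)) ∧
      ∀ s, Φ s = ψ (s x) + s u := by
  have hDbot : D ≠ ⊥ := by rintro rfl; simp at hD
  obtain ⟨φ, hφ⟩ := Module.Projective.exists_dual_eq_one K hx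
  obtain ⟨u, hu⟩ := exists_forall_eq_apply_smulRight_add hφ fun f hf ↦
    exists_forall_apply_smulRight_eq_smul_of_two_lt_finrank hK hV hA h0 hD hΦ hφ hf
  refine ⟨Φ ∘ₗ LinearMap.smulRightₗ φ, u, fun y hy ↦ ?_, hu⟩
  obtain ⟨p, hp, q, hq, hpq⟩ := coe_sdiff_nontrivial hK hA h0 hD
  have hstable {r : V} (hr : r ∈ (A : Set V) \ D) : Φ (φ.smulRight r) ∈ span K (A : Set V) :=
    span_mono (Set.singleton_subset_iff.2 hr.1) <|
      apply_smulRight_mem_span_singleton hΦ hφ hr.1 (not_le_span_singleton hDbot hr.2)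
  rw [← span_pair_eq_span_coe hA hp.1 hq.1 hpq] at hy
  obtain ⟨a, b, rfl⟩ := mem_span_pair.1 hy
  rw [map_add, map_smul, map_smul]
  exact add_mem (smul_mem _ a (hstable hp)) (smul_mem _ b (hstable hq))

theorem exists_forall_apply_sub_mem_span [FiniteDimensional K U] [FiniteDimensional K V]
    (hK : 3 ≤ ENat.card K) (hA : finrank K A.direction = 1) (h0 : (0 : V) ∉ A)
    (hD : finrank K D = 1) (hΦ : IsQuasiRangeCompatibleOn D {s | s x ∈ A} Φ) (hx : x ≠ 0) :
    ∃ u, ∀ s : U →ₗ[K] V, s x ∈ A → Φ s - s u ∈ span K (A : Set V) := by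
  rcases lt_or_ge 2 (finrank K V) with hV | hV
  · obtain ⟨ψ, u, hψ, hu⟩ :=
      exists_eq_apply_add_apply_of_two_lt_finrank hK hV hA h0 hD hΦ hx
    refine ⟨u, fun s hs ↦ ?_⟩
    rw [hu, add_sub_cancel_right]
    exact hψ _ (subset_span hs)
  · exact ⟨0, fun _ _ ↦ span_coe_eq_top_of_finrank_le_two hV hA h0 ▸ mem_top⟩

end RangeConstraints

end QuasiRangeCompatible

open QuasiRangeCompatible

/-- Let `K` have more than 2 elements, `dim V ≥ 2`, and `𝒮` an affine
subspace of `L(U,V)` with `codim 𝒮 = dim V − 1`. Assume there is `x ∈ U` such that the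
affine subspace `𝒮x = {s x : s ∈ 𝒮}` of `V` has dimension 1 and is not a linear
subspace (i.e. `0 ∉ 𝒮x`). Let `F : 𝒮 → V` be a non-local affine map that is
quasi-range-compatible with respect to a 1-dimensional linear subspace `D₀` of `V`. Then
(i) `K` has exactly 3 elements; (ii) `D₀ ∩ 𝒮x ≠ ∅`; (iii) there is `x' ∈ U` with
`F s − s x' ∈ span (𝒮x)` for all `s ∈ 𝒮`; (iv) if `dim V > 2` then there are a
`K`-linear endomorphism `ψ` of `span (𝒮x)` (encoded as a linear map `V →ₗ[K] V`
preserving `span (𝒮x)`) and `x' ∈ U` with `F s = ψ (s x) + s x'` for all `s ∈ 𝒮`. -/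
theorem quasi_range_compatible_affine_map_special_type_not_linear
    (K U V : Type*) [Field K] (hK : 2 < Cardinal.mk K)
    [AddCommGroup U] [Module K U] [FiniteDimensional K U]
    [AddCommGroup V] [Module K V] [FiniteDimensional K V]
    (hV : 2 ≤ Module.finrank K V)
    (𝒮 : AffineSubspace K (U →ₗ[K] V)) [Nonempty ↥𝒮]
    (hcodim : Module.finrank K (U →ₗ[K] V) + 1 =
      Module.finrank K 𝒮.direction + Module.finrank K V)
    (x : U) (Sx : AffineSubspace K V)
    (hSx : Sx = AffineSubspace.map (LinearMap.applyₗ x).toAffineMap 𝒮)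
    (hSxdim : Module.finrank K Sx.direction = 1)
    (hSxnotlin : (0 : V) ∉ Sx)
    (F : ↥𝒮 →ᵃ[K] V)
    (hnl : ¬ ∃ y : U, ∀ s : ↥𝒮, F s = (s : U →ₗ[K] V) y)
    (D₀ : Submodule K V) (hD₀ : Module.finrank K D₀ = 1)
    (hq : ∀ s : ↥𝒮, ¬ D₀ ≤ LinearMap.range (s : U →ₗ[K] V) →
      F s ∈ LinearMap.range (s : U →ₗ[K] V)) :
    Nat.card K = 3 ∧
    ((D₀ : Set V) ∩ (Sx : Set V)).Nonempty ∧
    (∃ x' : U, ∀ s : ↥𝒮,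
      F s - (s : U →ₗ[K] V) x' ∈ Submodule.span K (Sx : Set V)) ∧
    (2 < Module.finrank K V →
      ∃ (ψ : V →ₗ[K] V) (x' : U),
        (∀ y ∈ Submodule.span K (Sx : Set V), ψ y ∈ Submodule.span K (Sx : Set V)) ∧
        ∀ s : ↥𝒮, F s = ψ ((s : U →ₗ[K] V) x) + (s : U →ₗ[K] V) x') := by
  have hK3 : 3 ≤ ENat.card K :=
    Order.add_one_le_of_lt (by simpa [ENat.card] using hK : 2 < ENat.card K)
  subst hSx
  obtain ⟨s₀, hs₀⟩ := (inferInstance : Nonempty 𝒮)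
  have hx : x ≠ 0 := by
    rintro rfl
    exact hSxnotlin ⟨s₀, hs₀, map_zero s₀⟩
  have hmem (s : U →ₗ[K] V) :
      s ∈ 𝒮 ↔ s x ∈ 𝒮.map (LinearMap.applyₗ x).toAffineMap :=
    mem_iff_apply_mem_map (applyₗ_surjective hx) (hSxdim ▸ hcodim)
  obtain ⟨Φ, hΦF⟩ := exists_linearMap_eq_of_zero_notMem (fun h ↦ hSxnotlin ⟨0, h, rfl⟩) F
  simp only [hΦF] at hnl hq ⊢
  have hΦ : IsQuasiRangeCompatibleOn D₀
      {s | s x ∈ 𝒮.map (LinearMap.applyₗ x).toAffineMap} Φ :=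
    fun s hs ↦ hq ⟨s, (hmem s).2 hs⟩
  obtain ⟨hcard, hinter⟩ := card_eq_three_and_inter_nonempty_of_not_local hK3 hSxdim hSxnotlin
    hD₀ hΦ fun ⟨u, hu⟩ ↦ hnl ⟨u, fun s ↦ hu s ((hmem s).1 s.2)⟩
  obtain ⟨u, hu⟩ := exists_forall_apply_sub_mem_span hK3 hSxdim hSxnotlin hD₀ hΦ hx
  refine ⟨hcard, hinter, ⟨u, fun s ↦ hu s ((hmem s).1 s.2)⟩, fun hV₂ ↦ ?_⟩
  obtain ⟨ψ, u', hψ, hu'⟩ :=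
    exists_eq_apply_add_apply_of_two_lt_finrank hK3 hV₂ hSxdim hSxnotlin hD₀ hΦ hx
  exact ⟨ψ, u', hψ, fun s ↦ hu' s⟩
end

section
/- Let S be a linear subspace of L(U,V), let F : S → V be an additive group homomorphism that is quasi-range-compatible with respect to a 1-dimensional linear subspace D of V, and let V₀ be a linear subspace of V with D ⊄ V₀. Denote by π : V → V/V₀ the canonical projection and set S mod V₀ := {π ∘ s : s ∈ S} ⊆ L(U, V/V₀). Then there is a unique additive group homomorphism G : S mod V₀ → V/V₀ such that G(π ∘ s) = π(F(s)) for all s ∈ S, and this G is quasi-range-compatible with respect to the 1-dimensional subspace π(D) of V/V₀. -/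
/-!
If `s ∈ S` has its range inside a subspace `P` with `D ⊄ P`, then `D ⊄ range s`, so
`F s ∈ range s ⊆ P`. For `P = V₀` this says that `π ∘ s = 0` implies `π (F s) = 0`, hence `π ∘ F`
factors uniquely through the surjection `s ↦ π ∘ s`. The factor `G` is again
quasi-range-compatible, because `D ⊆ range s` implies `π(D) ⊆ π(range s) = range (π ∘ s)`.
Finally, the line `D ⊄ V₀` meets `V₀` trivially, so `π` is injective on `D` and `π(D)` is a line.
The argument works for any linear map `f` in place of `π`, with `ker f` in place of `V₀`.
-/

theorem existsUnique_addMonoidHom_comp_eq {A B C : Type*} [AddGroup A] [AddGroup B] [AddGroup C]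
    {p : A →+ B} (hp : Function.Surjective p) {g : A →+ C} (hpg : p.ker ≤ g.ker) :
    ∃! φ : B →+ C, φ.comp p = g :=
  ⟨p.liftOfSurjective hp ⟨g, hpg⟩, p.liftOfRightInverse_comp _ _ _,
    fun φ hφ ↦ p.eq_liftOfRightInverse _ _ g hpg φ hφ⟩

theorem finrank_map_of_disjoint_ker {R M N : Type*} [Ring R] [AddCommGroup M] [Module R M]
    [AddCommGroup N] [Module R N] {f : M →ₗ[R] N} {p : Submodule R M}
    (hp : Disjoint p (LinearMap.ker f)) : Module.finrank R (p.map f) = Module.finrank R p :=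
  have injective : Function.Injective (f.submoduleMap p) :=
    LinearMap.submoduleMap_injective_of_injOn (LinearMap.injOn_of_disjoint_ker le_rfl hp)
  (LinearEquiv.ofBijective _ ⟨injective, f.submoduleMap_surjective p⟩).finrank_eq.symm

theorem finrank_map_eq_one_of_not_le_ker {K V W : Type*} [DivisionRing K]
    [AddCommGroup V] [Module K V] [AddCommGroup W] [Module K W] {f : V →ₗ[K] W} {D : Submodule K V}
    (hD : Module.finrank K D = 1) (hDf : ¬ D ≤ LinearMap.ker f) :
    Module.finrank K (D.map f) = 1 := by
  have isAtom : IsAtom D := Submodule.isAtom_iff_finrank_eq_one.mpr hD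
  rw [finrank_map_of_disjoint_ker (isAtom.not_le_iff_disjoint.mp hDf), hD]

section

variable {K U V W : Type*} [CommSemiring K] [AddCommMonoid U] [Module K U]
  [AddCommMonoid V] [Module K V] [AddCommMonoid W] [Module K W]

/-- Quasi-range-compatibility of a map `F : S → V` with respect to `D`, for a set `S` of linear maps
from `U` to `V`. Here `D` may be any submodule, and `S` any set-like object, so that subsets and
linear subspaces are both covered. -/
def IsQuasiRangeCompatible {σ : Type*} [SetLike σ (U →ₗ[K] V)] {S : σ} (D : Submodule K V)
    (F : S → V) : Prop :=
  ∀ s : S, ¬ D ≤ LinearMap.range (s : U →ₗ[K] V) → F s ∈ LinearMap.range (s : U →ₗ[K] V)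

/-- `G` is the map on `{f ∘ s : s ∈ S}` induced by `F : S → V`, i.e. `G (f ∘ s) = f (F s)`. For
`f` the projection onto `V ⧸ V₀`, the domain of `G` is `S mod V₀`. -/
def IsPushforward {S : Submodule K (U →ₗ[K] V)} (f : V →ₗ[K] W) (F : S → V)
    (G : S.map (LinearMap.llcomp K U V W f) → W) : Prop :=
  ∀ (s : S) (h : f ∘ₗ (s : U →ₗ[K] V) ∈ S.map (LinearMap.llcomp K U V W f)),
    G ⟨f ∘ₗ (s : U →ₗ[K] V), h⟩ = f (F s)

theorem isPushforward_iff_comp_submoduleMap_eq {S : Submodule K (U →ₗ[K] V)} {f : V →ₗ[K] W}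
    {F : S →+ V} {G : S.map (LinearMap.llcomp K U V W f) →+ W} :
    IsPushforward f F G ↔
      G.comp ((LinearMap.llcomp K U V W f).submoduleMap S).toAddMonoidHom =
        f.toAddMonoidHom.comp F :=
  ⟨fun hG ↦ AddMonoidHom.ext fun s ↦ hG s _, fun hG s _ ↦ DFunLike.congr_fun hG s⟩

namespace IsQuasiRangeCompatible

theorem mem_of_range_le {σ : Type*} [SetLike σ (U →ₗ[K] V)] {S : σ} {D P : Submodule K V}
    {F : S → V} (hF : IsQuasiRangeCompatible D F) (hDP : ¬ D ≤ P) {s : S}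
    (hs : LinearMap.range (s : U →ₗ[K] V) ≤ P) : F s ∈ P :=
  hs (hF s fun hDs ↦ hDP (hDs.trans hs))

theorem of_isPushforward {S : Submodule K (U →ₗ[K] V)} {D : Submodule K V} {f : V →ₗ[K] W}
    {F : S → V} {G : S.map (LinearMap.llcomp K U V W f) → W} (hF : IsQuasiRangeCompatible D F)
    (hG : IsPushforward f F G) : IsQuasiRangeCompatible (D.map f) G := by
  rintro ⟨t, ht⟩ hD
  obtain ⟨s, hs, rfl : f ∘ₗ s = t⟩ := Submodule.mem_map.mp ht
  rw [LinearMap.range_comp] at hD ⊢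
  rw [hG ⟨s, hs⟩]
  exact Submodule.mem_map_of_mem (hF ⟨s, hs⟩ fun hDs ↦ hD (Submodule.map_mono hDs))

end IsQuasiRangeCompatible

end

theorem IsQuasiRangeCompatible.existsUnique_isPushforward {K U V W : Type*} [CommRing K]
    [AddCommMonoid U] [Module K U] [AddCommGroup V] [Module K V] [AddCommGroup W] [Module K W]
    {S : Submodule K (U →ₗ[K] V)} {D : Submodule K V} {f : V →ₗ[K] W} {F : S →+ V}
    (hF : IsQuasiRangeCompatible D F) (hD : ¬ D ≤ LinearMap.ker f) :
    ∃! G : S.map (LinearMap.llcomp K U V W f) →+ W, IsPushforward f F G := by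
  simp only [isPushforward_iff_comp_submoduleMap_eq]
  refine existsUnique_addMonoidHom_comp_eq (LinearMap.submoduleMap_surjective _ S) fun s hs ↦ ?_
  have comp_eq_zero : f ∘ₗ (s : U →ₗ[K] V) = 0 := congrArg Subtype.val hs
  exact hF.mem_of_range_le hD (LinearMap.range_le_ker_iff.mpr comp_eq_zero)

theorem quasi_range_compatible_hom_quotient_general {K U V W : Type*} [Field K]
    [AddCommMonoid U] [Module K U] [AddCommGroup V] [Module K V] [AddCommGroup W] [Module K W]
    {S : Submodule K (U →ₗ[K] V)} {F : S →+ V} {D : Submodule K V}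
    (hD : Module.finrank K D = 1) (hF : IsQuasiRangeCompatible D F)
    (f : V →ₗ[K] W) (hDf : ¬ D ≤ LinearMap.ker f) :
    (∃! G : S.map (LinearMap.llcomp K U V W f) →+ W, IsPushforward f F G) ∧
      Module.finrank K (D.map f) = 1 ∧
      ∀ G : S.map (LinearMap.llcomp K U V W f) →+ W,
        IsPushforward f F G → IsQuasiRangeCompatible (D.map f) G :=
  ⟨hF.existsUnique_isPushforward hDf, finrank_map_eq_one_of_not_le_ker hD hDf,
    fun _ ↦ hF.of_isPushforward⟩

/-- Let `S` be a linear subspace of `L(U,V)`, `F : S → V` an additive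
homomorphism that is quasi-range-compatible with respect to a 1-dimensional subspace
`D` of `V`, and `V₀` a linear subspace of `V` with `D ⊄ V₀`. With `π = V₀.mkQ` the
canonical projection `V → V/V₀`, set `S mod V₀ := {π ∘ s : s ∈ S}`, i.e.
`Submodule.map (LinearMap.llcomp K U V (V ⧸ V₀) V₀.mkQ) S`. Then there is a unique
additive homomorphism `G : S mod V₀ → V/V₀` with `G (π ∘ s) = π (F s)` for all `s ∈ S`,
and any such `G` is quasi-range-compatible with respect to the 1-dimensional subspace
`π(D)` of `V/V₀`. -/
theorem quasi_range_compatible_hom_quotient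
    (K U V : Type*) [Field K]
    [AddCommGroup U] [Module K U] [FiniteDimensional K U]
    [AddCommGroup V] [Module K V] [FiniteDimensional K V]
    (S : Submodule K (U →ₗ[K] V))
    (F : ↥S →+ V)
    (D : Submodule K V) (hD : Module.finrank K D = 1)
    (hq : ∀ s : ↥S, ¬ D ≤ LinearMap.range (s : U →ₗ[K] V) →
      F s ∈ LinearMap.range (s : U →ₗ[K] V))
    (V₀ : Submodule K V) (hV₀ : ¬ D ≤ V₀) :
    (∃! G : ↥(Submodule.map (LinearMap.llcomp K U V (V ⧸ V₀) V₀.mkQ) S) →+ V ⧸ V₀,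
      ∀ (s : ↥S) (h : V₀.mkQ ∘ₗ (s : U →ₗ[K] V) ∈
          Submodule.map (LinearMap.llcomp K U V (V ⧸ V₀) V₀.mkQ) S),
        G ⟨V₀.mkQ ∘ₗ (s : U →ₗ[K] V), h⟩ = V₀.mkQ (F s)) ∧
    Module.finrank K (Submodule.map V₀.mkQ D) = 1 ∧
    (∀ G : ↥(Submodule.map (LinearMap.llcomp K U V (V ⧸ V₀) V₀.mkQ) S) →+ V ⧸ V₀,
      (∀ (s : ↥S) (h : V₀.mkQ ∘ₗ (s : U →ₗ[K] V) ∈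
          Submodule.map (LinearMap.llcomp K U V (V ⧸ V₀) V₀.mkQ) S),
        G ⟨V₀.mkQ ∘ₗ (s : U →ₗ[K] V), h⟩ = V₀.mkQ (F s)) →
      ∀ t : ↥(Submodule.map (LinearMap.llcomp K U V (V ⧸ V₀) V₀.mkQ) S),
        ¬ Submodule.map V₀.mkQ D ≤ LinearMap.range (t : U →ₗ[K] V ⧸ V₀) →
          G t ∈ LinearMap.range (t : U →ₗ[K] V ⧸ V₀)) :=
  quasi_range_compatible_hom_quotient_general hD hq V₀.mkQ (by rwa [Submodule.ker_mkQ])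
end
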